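/- arXiv:2409.14148 — 2 statements merged into one kernel-verified Lean document; each statement's English description precedes it below -/
import Mathlib

section
/- Let 𝒳, 𝒴, 𝒵, 𝒥 be finite sets, R > 0, and let P_{XYZJ}, Q_{XYZJ} be pmfs with D(P_{XYJ}‖Q_{XYJ}) < ∞ and D(P_{XZJ}‖Q_{XZJ}) < ∞. Set Y' = (Y, J) and Z' = (Z, J). Then E_{P_{XY},Q_{XY}}(R) ≤ G_{P_{XY'},Q_{XY'},P_{XZ'},Q_{XZ'}}(R) + E_{P_{XZ'},Q_{XZ'}}(R). -/
open scoped BigOperators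

noncomputable section

open Classical in
/-- Pushforward of a finitely supported mass function along a map. -/
def pushf {Ω α : Type*} [Fintype Ω] (p : Ω → ℝ) (f : Ω → α) : α → ℝ :=
  fun a => ∑ ω, if f ω = a then p ω else 0

/-- `p` is a probability mass function. -/
def IsPMF {α : Type*} [Fintype α] (p : α → ℝ) : Prop :=
  (∀ a, 0 ≤ p a) ∧ ∑ a, p a = 1

/-- Kullback–Leibler divergence `D(p‖q)` of mass functions, valued in `EReal`
(equal to `⊤` if `p` is not absolutely continuous w.r.t. `q`). -/
def klDiv {α : Type*} [Fintype α] (p q : α → ℝ) : EReal :=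
  if ∀ a, q a = 0 → p a = 0 then ((∑ a, p a * Real.log (p a / q a) : ℝ) : EReal) else ⊤

/-- Shannon entropy. -/
def entropy {α : Type*} [Fintype α] (p : α → ℝ) : ℝ :=
  -∑ a, p a * Real.log (p a)

/-- Conditional mutual information `I(A;B|C)` under the mass function `p`. -/
def condMI {Ω α β γ : Type*} [Fintype Ω] [Fintype α] [Fintype β] [Fintype γ]
    (p : Ω → ℝ) (A : Ω → α) (B : Ω → β) (C : Ω → γ) : ℝ :=
  entropy (pushf p (fun ω => (A ω, C ω))) + entropy (pushf p (fun ω => (B ω, C ω)))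
    - entropy (pushf p (fun ω => (A ω, B ω, C ω))) - entropy (pushf p C)

/-- First marginal of a joint mass function. -/
def margFst {α β : Type*} [Fintype α] [Fintype β] (p : α × β → ℝ) : α → ℝ :=
  fun a => ∑ b, p (a, b)

/-- Conditional mass function of the second coordinate given the first. -/
def condSnd {α β : Type*} [Fintype α] [Fintype β] (p : α × β → ℝ) : α → β → ℝ :=
  fun a b => p (a, b) / margFst p a

/-- Output distribution of a channel on an input distribution. -/
def outDist {α β : Type*} [Fintype α] [Fintype β] (ch : α → β → ℝ) (pa : α → ℝ) : β → ℝ :=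
  fun b => ∑ a, pa a * ch a b

/-- The difference functional
`f(P'_X) = sup_{Q̂_X ≪ Q_X} D(P'_Y‖Q̂_Y) − D(P'_Z‖Q̂_Z)`. -/
def fdiff {X Y Z : Type*} [Fintype X] [Fintype Y] [Fintype Z]
    (pYgX : X → Y → ℝ) (pZgX : X → Z → ℝ) (qYgX : X → Y → ℝ) (qZgX : X → Z → ℝ)
    (qX : X → ℝ) (pX' : X → ℝ) : EReal :=
  sSup {d : EReal | ∃ qhX : X → ℝ, IsPMF qhX ∧ (∀ x, qX x = 0 → qhX x = 0) ∧
    d = klDiv (outDist pYgX pX') (outDist qYgX qhX)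
        - klDiv (outDist pZgX pX') (outDist qZgX qhX)}

/-- The quantity `G_{P_XY, Q_XY, P_XZ, Q_XZ}(R)`: the supremum over finite sets `𝒰`
(represented by `Fin m`) and channels `P_{U|X}` with `I_P(U;X|Y) ≤ R` and `I_P(U;X|Z) ≤ R`
of `∑_u P_U(u) f(P_{X|U}(·|u))`. -/
def Gexp {X Y Z : Type*} [Fintype X] [Fintype Y] [Fintype Z]
    (pXY : X × Y → ℝ) (qXY : X × Y → ℝ) (pXZ : X × Z → ℝ) (qXZ : X × Z → ℝ)
    (R : ℝ) : EReal :=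
  sSup {v : EReal | ∃ (m : ℕ) (ch : X → Fin m → ℝ),
    (∀ x, IsPMF (ch x)) ∧
    condMI (fun w : Fin m × X × Y => ch w.2.1 w.1 * pXY (w.2.1, w.2.2))
      (fun w => w.1) (fun w => w.2.1) (fun w => w.2.2) ≤ R ∧
    condMI (fun w : Fin m × X × Z => ch w.2.1 w.1 * pXZ (w.2.1, w.2.2))
      (fun w => w.1) (fun w => w.2.1) (fun w => w.2.2) ≤ R ∧
    v = ∑ u : Fin m,
      ((∑ x, ch x u * margFst pXY x : ℝ) : EReal) *
        fdiff (condSnd pXY) (condSnd pXZ) (condSnd qXY) (condSnd qXZ)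
          (margFst qXY)
          (fun x => ch x u * margFst pXY x / ∑ x', ch x' u * margFst pXY x')}

/-- The error exponent of distributed hypothesis testing, via the Ahlswede–Csiszár
multi-letter characterization. -/
def errExp {X W : Type*} [Fintype X] [Fintype W]
    (pXW qXW : X × W → ℝ) (R : ℝ) : EReal :=
  sSup {v : EReal | ∃ n : ℕ, 0 < n ∧
    ∃ κ : (Fin n → X) → Fin (2 ^ ⌊(n : ℝ) * R⌋₊) → ℝ,
      (∀ x, IsPMF (κ x)) ∧
      v = (((n : ℝ)⁻¹ : ℝ) : EReal) *
        klDiv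
          (fun mw : Fin (2 ^ ⌊(n : ℝ) * R⌋₊) × (Fin n → W) =>
            ∑ x : Fin n → X, (∏ i, pXW (x i, mw.2 i)) * κ x mw.1)
          (fun mw : Fin (2 ^ ⌊(n : ℝ) * R⌋₊) × (Fin n → W) =>
            ∑ x : Fin n → X, (∏ i, qXW (x i, mw.2 i)) * κ x mw.1)}


namespace AR

open Finset

variable {X V V' M : Type*} [Fintype X] [Fintype V] [Fintype V'] [Fintype M]

def ins {m : ℕ} {V : Type*} (i : Fin (m+1)) (v0 : V) (v : Fin m → V) : Fin (m+1) → V :=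
  Fin.insertNth (α := fun _ => V) i v0 v

lemma ins_same {m : ℕ} {V : Type*} (i : Fin (m+1)) (v0 : V) (v : Fin m → V) : ins i v0 v i = v0 := by
  simp [ins]

lemma ins_succAbove {m : ℕ} {V : Type*} (i : Fin (m+1)) (v0 : V) (v : Fin m → V) (j : Fin m) :
    ins i v0 v (i.succAbove j) = v j := by
  simp [ins]

lemma sum_ins {m : ℕ} (i : Fin (m+1)) (F : (Fin (m+1) → V) → ℝ) :
    ∑ w, F w = ∑ v0 : V, ∑ v : Fin m → V, F (ins i v0 v) := by
  rw [← (Fin.insertNthEquiv (fun _ => V) i).sum_comp, Fintype.sum_prod_type]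
  rfl

lemma sum_ins' {m : ℕ} (i : Fin (m+1)) (F : M × (Fin (m+1) → V) → ℝ) :
    ∑ w, F w = ∑ u : M × (Fin m → V), ∑ v0 : V, F (u.1, ins i v0 u.2) := by
  rw [Fintype.sum_prod_type, Fintype.sum_prod_type]
  refine Finset.sum_congr rfl fun k _ => ?_
  rw [sum_ins i, Finset.sum_comm]

def law {n : ℕ} {X V M : Type*} [Fintype X] (c : Fin n → X × V → ℝ) (κ : (Fin n → X) → M → ℝ) :
    M × (Fin n → V) → ℝ :=
  fun mw => ∑ x : Fin n → X, (∏ i, c i (x i, mw.2 i)) * κ x mw.1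

lemma law_nonneg {n : ℕ} {X V M : Type*} [Fintype X] {c : Fin n → X × V → ℝ} {κ : (Fin n → X) → M → ℝ}
    (hc : ∀ i s, 0 ≤ c i s) (hκ : ∀ x k, 0 ≤ κ x k) (u) : 0 ≤ law c κ u :=
  Finset.sum_nonneg fun _ _ => mul_nonneg (Finset.prod_nonneg fun _ _ => hc _ _) (hκ _ _)

lemma law_ac {n : ℕ} {X V M : Type*} [Fintype X] {c c' : Fin n → X × V → ℝ} {κ : (Fin n → X) → M → ℝ}
    (hc : ∀ i s, 0 ≤ c' i s) (hκ : ∀ x k, 0 ≤ κ x k) (h : ∀ i s, c' i s = 0 → c i s = 0)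
    (u) (hu : law c' κ u = 0) : law c κ u = 0 := by
  unfold law at *
  rw [Finset.sum_eq_zero_iff_of_nonneg
    (fun _ _ => mul_nonneg (Finset.prod_nonneg fun _ _ => hc _ _) (hκ _ _))] at hu
  refine Finset.sum_eq_zero fun x hx => ?_
  rcases mul_eq_zero.1 (hu x hx) with h1 | h1
  · obtain ⟨i, hi, h2⟩ := Finset.prod_eq_zero_iff.1 h1
    rw [Finset.prod_eq_zero hi (h _ _ h2), zero_mul]
  · rw [h1, mul_zero]

lemma prod_sum' {n : ℕ} (f : Fin n → V → ℝ) :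
    ∏ i, ∑ v, f i v = ∑ w : Fin n → V, ∏ i, f i (w i) := by
  classical
  rw [Finset.prod_univ_sum]
  simp

lemma law_sum_fst {n : ℕ} {c : Fin n → X × V → ℝ} {κ : (Fin n → X) → M → ℝ}
    (hκ : ∀ x, ∑ k, κ x k = 1) (w : Fin n → V) :
    ∑ k, law c κ (k, w) = ∏ i, ∑ x, c i (x, w i) := by
  unfold law
  rw [Finset.sum_comm, prod_sum']
  refine Finset.sum_congr rfl fun x _ => ?_
  simp only
  rw [← Finset.mul_sum, hκ, mul_one]

lemma law_sum {n : ℕ} {c : Fin n → X × V → ℝ} {κ : (Fin n → X) → M → ℝ}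
    (hκ : ∀ x, ∑ k, κ x k = 1) (hc : ∀ i, ∑ v, ∑ x, c i (x, v) = 1) :
    ∑ u, law c κ u = 1 := by
  rw [Fintype.sum_prod_type, Finset.sum_comm]
  simp only [law_sum_fst hκ]
  rw [← prod_sum' (fun i v => ∑ x, c i (x, v))]
  simp [hc]

open Classical in
def pT {n : ℕ} (t : Fin n → V → V' → ℝ) (u : M × (Fin n → V)) (u' : M × (Fin n → V')) : ℝ :=
  if u.1 = u'.1 then ∏ i, t i (u.2 i) (u'.2 i) else 0

lemma pT_nonneg {n : ℕ} {t : Fin n → V → V' → ℝ} (ht : ∀ i v v', 0 ≤ t i v v')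
    (u : M × (Fin n → V)) (u') : 0 ≤ pT t u u' := by
  unfold pT
  split_ifs
  · exact Finset.prod_nonneg fun _ _ => ht _ _ _
  · exact le_rfl

lemma pT_sum {n : ℕ} {t : Fin n → V → V' → ℝ} (ht : ∀ i v, ∑ v', t i v v' = 1)
    (u : M × (Fin n → V)) : ∑ u', pT t u u' = 1 := by
  unfold pT
  rw [Fintype.sum_prod_type, Finset.sum_eq_single u.1]
  · simp only [if_true]
    rw [← prod_sum' (fun i v' => t i (u.2 i) v')]
    simp [ht]
  · intro k _ hk
    simp [Ne.symm hk]
  · simp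

lemma law_post {n : ℕ} {c : Fin n → X × V → ℝ} {c' : Fin n → X × V' → ℝ} {κ : (Fin n → X) → M → ℝ}
    {t : Fin n → V → V' → ℝ} (h : ∀ i x v', c' i (x, v') = ∑ v, c i (x, v) * t i v v') (u') :
    law c' κ u' = ∑ u, law c κ u * pT t u u' := by
  unfold pT
  rw [Fintype.sum_prod_type, Finset.sum_eq_single u'.1]
  · simp only [if_true]
    unfold law
    simp only [Finset.sum_mul]
    rw [Finset.sum_comm]
    refine Finset.sum_congr rfl fun x _ => ?_
    simp only [h]
    rw [prod_sum', Finset.sum_mul]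
    refine Finset.sum_congr rfl fun w _ => ?_
    rw [Finset.prod_mul_distrib]
    ring
  · intro k _ hk
    simp [hk]
  · simp

lemma law_ins {m : ℕ} (i : Fin (m+1)) (c : Fin (m+1) → X × V → ℝ) (κ : (Fin (m+1) → X) → M → ℝ)
    (v0 : V) (u : M × (Fin m → V)) :
    law c κ (u.1, ins i v0 u.2) =
      ∑ x, c i (x, v0) * law (fun j => c (i.succAbove j)) (fun x' => κ (ins i x x')) u := by
  unfold law
  rw [sum_ins i]
  refine Finset.sum_congr rfl fun x _ => ?_
  rw [Finset.mul_sum]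
  refine Finset.sum_congr rfl fun x' _ => ?_
  rw [Fin.prod_univ_succAbove _ i]
  simp only [ins_same, ins_succAbove]
  ring

/-! log-sum and data processing -/

lemma logsum {S : Type*} (s : Finset S) (a b : S → ℝ) (ha : ∀ i, 0 ≤ a i) (hb : ∀ i, 0 ≤ b i)
    (hab : ∀ i, b i = 0 → a i = 0) :
    (∑ i ∈ s, a i) * Real.log ((∑ i ∈ s, a i) / ∑ i ∈ s, b i) ≤ ∑ i ∈ s, a i * Real.log (a i / b i) := by
  set A := ∑ i ∈ s, a i with hA
  set B := ∑ i ∈ s, b i with hB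
  have hA0 : 0 ≤ A := Finset.sum_nonneg fun _ _ => ha _
  have hB0 : 0 ≤ B := Finset.sum_nonneg fun _ _ => hb _
  rcases hA0.eq_or_lt with h0 | hApos
  · rw [← h0, zero_mul]
    refine le_of_eq (Finset.sum_eq_zero fun i hi => ?_).symm
    have := (Finset.sum_eq_zero_iff_of_nonneg (fun i _ => ha i)).1 h0.symm i hi
    rw [this, zero_mul]
  have hBpos : 0 < B := by
    rcases hB0.eq_or_lt with h0 | h
    · exfalso
      have h1 := (Finset.sum_eq_zero_iff_of_nonneg (fun i _ => hb i)).1 h0.symm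
      have : A = 0 := Finset.sum_eq_zero fun i hi => hab i (h1 i hi)
      linarith
    · exact h
  have key : ∀ i ∈ s, a i - b i * (A / B) ≤ a i * Real.log (a i / b i) - a i * Real.log (A / B) := by
    intro i hi
    rcases (ha i).eq_or_lt with h0 | hpos
    · rw [← h0]
      have : 0 ≤ b i * (A / B) := mul_nonneg (hb i) (by positivity)
      simp; linarith
    · have hbi : 0 < b i := lt_of_le_of_ne (hb i) fun h => hpos.ne' (hab i h.symm)
      have h1 := Real.log_le_sub_one_of_pos (x := (A / B) / (a i / b i)) (by positivity)
      rw [Real.log_div (by positivity) (by positivity)] at h1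
      have h2 := mul_le_mul_of_nonneg_left h1 hpos.le
      have h3 : a i * (A / B / (a i / b i) - 1) = b i * (A / B) - a i := by
        field_simp
      linarith
  have := Finset.sum_le_sum key
  rw [Finset.sum_sub_distrib, Finset.sum_sub_distrib, ← Finset.sum_mul, ← Finset.sum_mul, ← hA, ← hB] at this
  have h4 : B * (A / B) = A := by field_simp
  linarith

def kl {S : Type*} [Fintype S] (p q : S → ℝ) : ℝ := ∑ a, p a * Real.log (p a / q a)

lemma dpi {S S' : Type*} [Fintype S] [Fintype S'] (a b : S → ℝ) (a' b' : S' → ℝ)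
    (ha : ∀ i, 0 ≤ a i) (hb : ∀ i, 0 ≤ b i)
    (hab : ∀ i, b i = 0 → a i = 0) (T : S → S' → ℝ) (hT : ∀ s s', 0 ≤ T s s')
    (hT1 : ∀ s, ∑ s', T s s' = 1) (ha' : ∀ s', a' s' = ∑ s, a s * T s s')
    (hb' : ∀ s', b' s' = ∑ s, b s * T s s') : kl a' b' ≤ kl a b := by
  have : kl a b = ∑ s', ∑ s, (a s * T s s') * Real.log ((a s * T s s') / (b s * T s s')) := by
    rw [Finset.sum_comm]
    refine Finset.sum_congr rfl fun s _ => ?_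
    have : ∀ s', a s * T s s' * Real.log (a s * T s s' / (b s * T s s')) =
        T s s' * (a s * Real.log (a s / b s)) := by
      intro s'
      by_cases h : T s s' = 0
      · simp [h]
      · rw [mul_div_mul_right _ _ h]; ring
    simp only [this]
    rw [← Finset.sum_mul, hT1, one_mul]
  rw [this]
  refine Finset.sum_le_sum fun s' _ => ?_
  rw [ha', hb']
  refine logsum _ _ _ (fun s => mul_nonneg (ha s) (hT s s')) (fun s => mul_nonneg (hb s) (hT s s')) ?_
  intro s h
  rcases mul_eq_zero.1 h with h | h
  · rw [hab s h, zero_mul]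
  · rw [h, mul_zero]

/-! entropies -/

local notation "φ" => Real.negMulLog

def hV (p : X × V → ℝ) : ℝ := ∑ v, φ (∑ x, p (x, v))

def ent {n : ℕ} (c : Fin n → X × V → ℝ) (κ : (Fin n → X) → M → ℝ) : ℝ := ∑ u, φ (law c κ u)

lemma ent_prod : ∀ {n : ℕ} (p : Fin n → V → ℝ) (_ : ∀ i, ∑ v, p i v = 1),
    ∑ w : Fin n → V, φ (∏ i, p i (w i)) = ∑ i, ∑ v, φ (p i v) := by
  intro n
  induction n with
  | zero => intro p _; simp
  | succ m ih =>
    intro p hp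
    rw [sum_ins 0, Fin.sum_univ_succ]
    have h1 : ∀ (v0 : V) (v : Fin m → V), φ (∏ i, p i (ins 0 v0 v i)) =
        (∏ i, p i.succ (v i)) * φ (p 0 v0) + p 0 v0 * φ (∏ i, p i.succ (v i)) := by
      intro v0 v
      rw [Fin.prod_univ_succAbove _ 0, Real.negMulLog_mul]
      simp only [ins_same, ins_succAbove]
      simp
    simp only [h1, Finset.sum_add_distrib]
    rw [← ih (fun i => p i.succ) (fun i => hp _)]
    congr 1
    · refine Finset.sum_congr rfl fun v0 _ => ?_
      rw [← Finset.sum_mul, ← prod_sum' (fun i v => p i.succ v)]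
      simp [hp]
    · simp only [← Finset.mul_sum]
      rw [← Finset.sum_mul, hp, one_mul]

lemma ent_upper {n : ℕ} [Nonempty M] {c : Fin n → X × V → ℝ} {κ : (Fin n → X) → M → ℝ}
    (hc : ∀ i s, 0 ≤ c i s) (hκ0 : ∀ x k, 0 ≤ κ x k)
    (hκ : ∀ x, ∑ k, κ x k = 1) (hc1 : ∀ i, ∑ v, ∑ x, c i (x, v) = 1) :
    ent c κ ≤ (∑ i, hV (c i)) + Real.log (Fintype.card M) := by
  have h0 : ∑ w : Fin n → V, ∑ k, law c κ (k, w) = 1 := by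
    rw [← law_sum hκ hc1, Fintype.sum_prod_type, Finset.sum_comm]
  unfold ent hV
  rw [← ent_prod (fun i v => ∑ x, c i (x, v)) hc1, Fintype.sum_prod_type, Finset.sum_comm]
  have : Real.log (Fintype.card M) = ∑ w : Fin n → V, (∑ k, law c κ (k, w)) * Real.log (Fintype.card M) := by
    rw [← Finset.sum_mul, h0, one_mul]
  rw [this, ← Finset.sum_add_distrib]
  refine Finset.sum_le_sum fun w _ => ?_
  rw [← law_sum_fst hκ]
  have h1 := logsum Finset.univ (fun k => law c κ (k, w)) (fun _ => 1)
    (fun k => law_nonneg hc hκ0 _) (by simp) (by simp)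
  simp only [div_one, Finset.sum_const, Finset.card_univ, nsmul_eq_mul, mul_one] at h1
  simp only [Real.negMulLog, neg_mul, Finset.sum_neg_distrib]
  set A := ∑ k, law c κ (k, w)
  by_cases hA : A = 0
  · rw [hA] at h1 ⊢; simp at h1 ⊢; linarith
  · rw [Real.log_div hA (by simp)] at h1
    linarith

lemma ent_lower {n : ℕ} {c : Fin n → X × V → ℝ} {κ : (Fin n → X) → M → ℝ}
    (hc : ∀ i s, 0 ≤ c i s) (hκ0 : ∀ x k, 0 ≤ κ x k)
    (hκ : ∀ x, ∑ k, κ x k = 1) (hc1 : ∀ i, ∑ v, ∑ x, c i (x, v) = 1) :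
    (∑ i, hV (c i)) ≤ ent c κ := by
  unfold ent hV
  rw [← ent_prod (fun i v => ∑ x, c i (x, v)) hc1, Fintype.sum_prod_type, Finset.sum_comm]
  refine Finset.sum_le_sum fun w _ => ?_
  rw [← law_sum_fst hκ]
  simp only [Real.negMulLog, neg_mul, Finset.sum_neg_distrib]
  rw [neg_le_neg_iff, Finset.sum_mul]
  refine Finset.sum_le_sum fun k _ => ?_
  have hn : ∀ k, 0 ≤ law c κ (k, w) := fun k => law_nonneg hc hκ0 _
  rcases (hn k).eq_or_lt with h | h
  · rw [← h]; simp
  · exact mul_le_mul_of_nonneg_left (Real.log_le_log h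
      (Finset.single_le_sum (fun k _ => hn k) (Finset.mem_univ k))) h.le

variable {U U' : Type*} [Fintype U] [Fintype U']

/-- conditional mutual information in closed form -/
def JJ (p : X × V → ℝ) (ch : X → U → ℝ) : ℝ :=
  ∑ u, ∑ v, φ (∑ x, p (x, v) * ch x u) - hV p - ∑ x, (∑ v, p (x, v)) * ∑ u, φ (ch x u)

lemma JJ_kl {p : X × V → ℝ} (hp : ∀ s, 0 ≤ p s) {ch : X → U → ℝ} (hch : ∀ x u, 0 ≤ ch x u)
    (hch1 : ∀ x, ∑ u, ch x u = 1) :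
    JJ p ch = ∑ x, ∑ v, kl (fun u => p (x, v) * ch x u)
      (fun u => p (x, v) * ((∑ x', p (x', v) * ch x' u) / ∑ x', p (x', v))) := by
  have h1 : ∀ x v, kl (fun u => p (x, v) * ch x u)
      (fun u => p (x, v) * ((∑ x', p (x', v) * ch x' u) / ∑ x', p (x', v))) =
      ∑ u, (- (p (x,v) * φ (ch x u)) - p (x,v) * ch x u * Real.log (∑ x', p (x', v) * ch x' u)
        + p (x,v) * ch x u * Real.log (∑ x', p (x', v))) := by
    intro x v
    refine Finset.sum_congr rfl fun u _ => ?_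
    simp only [Real.negMulLog]
    rcases (hp (x,v)).eq_or_lt with h | h
    · simp [← h]
    rcases (hch x u).eq_or_lt with h' | h'
    · simp [← h']
    have h2 : 0 < ∑ x', p (x', v) :=
      lt_of_lt_of_le h (Finset.single_le_sum (f := fun x' => p (x', v)) (fun _ _ => hp _) (Finset.mem_univ x))
    have h3 : 0 < ∑ x', p (x', v) * ch x' u :=
      lt_of_lt_of_le (mul_pos h h') (Finset.single_le_sum (f := fun x' => p (x', v) * ch x' u)
        (fun _ _ => mul_nonneg (hp _) (hch _ _)) (Finset.mem_univ x))
    rw [mul_div_mul_left _ _ h.ne', Real.log_div h'.ne' (by positivity), Real.log_div h3.ne' h2.ne']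
    ring
  simp only [h1, Finset.sum_add_distrib, Finset.sum_sub_distrib]
  have e1 : ∑ x, ∑ v, ∑ u, -(p (x,v) * φ (ch x u)) = - ∑ x, (∑ v, p (x, v)) * ∑ u, φ (ch x u) := by
    rw [← Finset.sum_neg_distrib]
    refine Finset.sum_congr rfl fun x _ => ?_
    rw [Finset.sum_mul, ← Finset.sum_neg_distrib]
    refine Finset.sum_congr rfl fun v _ => ?_
    rw [Finset.mul_sum, ← Finset.sum_neg_distrib]
  have e2 : ∑ x, ∑ v, ∑ u, p (x,v) * ch x u * Real.log (∑ x', p (x', v) * ch x' u) =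
      - ∑ u, ∑ v, φ (∑ x, p (x, v) * ch x u) := by
    rw [Finset.sum_comm, Finset.sum_comm (s := (Finset.univ : Finset U)), ← Finset.sum_neg_distrib]
    refine Finset.sum_congr rfl fun v _ => ?_
    rw [Finset.sum_comm, ← Finset.sum_neg_distrib]
    refine Finset.sum_congr rfl fun u _ => ?_
    rw [← Finset.sum_mul, Real.negMulLog]; ring
  have e3 : ∑ x, ∑ v, ∑ u, p (x,v) * ch x u * Real.log (∑ x', p (x', v)) = - hV p := by
    unfold hV
    rw [Finset.sum_comm, ← Finset.sum_neg_distrib]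
    refine Finset.sum_congr rfl fun v _ => ?_
    simp only [← Finset.sum_mul, ← Finset.mul_sum, hch1, mul_one]
    rw [Real.negMulLog]; ring
  rw [e1, e2, e3]
  unfold JJ
  ring

lemma JJ_mono {p : X × V → ℝ} (hp : ∀ s, 0 ≤ p s) {ch : X → U → ℝ} {ch' : X → U' → ℝ}
    (hch : ∀ x u, 0 ≤ ch x u) (hch1 : ∀ x, ∑ u, ch x u = 1)
    (hch' : ∀ x u, 0 ≤ ch' x u) (hch1' : ∀ x, ∑ u, ch' x u = 1)
    (T : U → U' → ℝ) (hT : ∀ s s', 0 ≤ T s s')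
    (hT1 : ∀ s, ∑ s', T s s' = 1) (h : ∀ x u', ch' x u' = ∑ u, ch x u * T u u') :
    JJ p ch' ≤ JJ p ch := by
  rw [JJ_kl hp hch hch1, JJ_kl hp hch' hch1']
  refine Finset.sum_le_sum fun x _ => Finset.sum_le_sum fun v _ => ?_
  have hs : ∀ u, 0 ≤ ∑ x', p (x', v) * ch x' u :=
    fun u => Finset.sum_nonneg fun _ _ => mul_nonneg (hp _) (hch _ _)
  refine dpi _ _ _ _ (fun u => mul_nonneg (hp _) (hch _ _)) (fun u => mul_nonneg (hp _)
    (div_nonneg (hs u) (Finset.sum_nonneg fun _ _ => hp _))) ?_ T hT hT1 ?_ ?_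
  · intro u hu
    rcases (hp (x,v)).eq_or_lt with h | h
    · simp [← h]
    rcases (hch x u).eq_or_lt with h' | h'
    · simp [← h']
    exfalso
    have h2 : 0 < ∑ x', p (x', v) :=
      lt_of_lt_of_le h (Finset.single_le_sum (f := fun x' => p (x', v)) (fun _ _ => hp _) (Finset.mem_univ x))
    have h3 : 0 < ∑ x', p (x', v) * ch x' u :=
      lt_of_lt_of_le (mul_pos h h') (Finset.single_le_sum (f := fun x' => p (x', v) * ch x' u)
        (fun _ _ => mul_nonneg (hp _) (hch _ _)) (Finset.mem_univ x))
    have : 0 < p (x, v) * ((∑ x', p (x', v) * ch x' u) / ∑ x', p (x', v)) := by positivity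
    exact this.ne' hu
  · intro u'
    simp only [h, Finset.mul_sum, mul_assoc]
  · intro u'
    have : ∀ u, p (x, v) * ((∑ x', p (x', v) * ch x' u) / ∑ x', p (x', v)) * T u u' =
      (p (x,v) / ∑ x', p (x', v)) * ((∑ x', p (x', v) * ch x' u) * T u u') := fun u => by ring
    simp only [this]
    rw [← Finset.mul_sum]
    have h5 : ∑ x', p (x', v) * ch' x' u' = ∑ u, (∑ x', p (x', v) * ch x' u) * T u u' := by
      simp only [Finset.sum_mul, h, Finset.mul_sum]
      rw [Finset.sum_comm]
      simp only [mul_assoc]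
    rw [h5]; ring


variable {W : Type*} [Fintype W]

open Classical in
def dl (W : Type*) (pX : X → ℝ) : X × (X ⊕ W) → ℝ :=
  fun s => Sum.elim (fun x' => if s.1 = x' then pX s.1 else 0) (fun _ => 0) s.2

lemma hV_dl (pX : X → ℝ) : hV (dl W pX) = ∑ x, φ (pX x) := by
  classical
  simp [hV, dl, Fintype.sum_sum_type]

lemma dl_marg (pX : X → ℝ) (x : X) : ∑ v, dl W pX (x, v) = pX x := by
  classical
  simp [dl, Fintype.sum_sum_type]

lemma dl_nonneg {pX : X → ℝ} (h : ∀ x, 0 ≤ pX x) (s) : 0 ≤ dl W pX s := by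
  obtain ⟨x, v⟩ := s
  rcases v with v | v
  · simp only [dl, Sum.elim_inl]; split_ifs
    · exact h _
    · exact le_rfl
  · simp [dl]

lemma ent_dl (pX : X → ℝ) {ch : X → U → ℝ} (hch1 : ∀ x, ∑ u, ch x u = 1) :
    ∑ u, ∑ v, φ (∑ x, dl W pX (x, v) * ch x u) = ∑ x, pX x * ∑ u, φ (ch x u) + ∑ x, φ (pX x) := by
  classical
  simp only [dl, Fintype.sum_sum_type, Sum.elim_inl, Sum.elim_inr, ite_mul, zero_mul,
    Finset.sum_ite_eq', Finset.mem_univ, if_true, Finset.sum_const_zero, Real.negMulLog_zero, add_zero]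
  rw [Finset.sum_comm, ← Finset.sum_add_distrib]
  refine Finset.sum_congr rfl fun x _ => ?_
  simp only [Real.negMulLog_mul, Finset.sum_add_distrib, ← Finset.mul_sum, ← Finset.sum_mul, hch1]
  ring

/-- the channel to all other coordinates and the message -/
def chn {m : ℕ} (i : Fin (m+1)) (c : Fin (m+1) → X × V → ℝ) (κ : (Fin (m+1) → X) → M → ℝ) :
    X → M × (Fin m → V) → ℝ :=
  fun x => law (fun j => c (i.succAbove j)) (fun x' => κ (ins i x x'))

lemma chn_congr {m : ℕ} (i : Fin (m+1)) {c c' : Fin (m+1) → X × V → ℝ} (κ : (Fin (m+1) → X) → M → ℝ)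
    (h : ∀ j, j ≠ i → c j = c' j) : chn i c κ = chn i c' κ := by
  unfold chn
  have : (fun j => c (i.succAbove j)) = fun j => c' (i.succAbove j) :=
    funext fun j => h _ (Fin.succAbove_ne i j)
  rw [this]

lemma ent_chn {m : ℕ} (i : Fin (m+1)) (c : Fin (m+1) → X × V → ℝ) (κ : (Fin (m+1) → X) → M → ℝ) :
    ent c κ = ∑ u, ∑ v, φ (∑ x, c i (x, v) * chn i c κ x u) := by
  unfold ent
  rw [sum_ins' i]
  simp only [law_ins]
  rfl

lemma sum_comm_one {c : X × V → ℝ} (h : ∑ s, c s = 1) : ∑ v, ∑ x, c (x, v) = 1 := by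
  rw [Finset.sum_comm, ← h, Fintype.sum_prod_type]

lemma chn_sum {m : ℕ} (i : Fin (m+1)) {c : Fin (m+1) → X × V → ℝ} {κ : (Fin (m+1) → X) → M → ℝ}
    (hκ : ∀ x, ∑ k, κ x k = 1) (hc : ∀ i, ∑ s, c i s = 1) (x) :
    ∑ u, chn i c κ x u = 1 :=
  law_sum (fun _ => hκ _) fun _ => sum_comm_one (hc _)

lemma chn_nonneg {m : ℕ} (i : Fin (m+1)) {c : Fin (m+1) → X × V → ℝ} {κ : (Fin (m+1) → X) → M → ℝ}
    (hκ : ∀ x k, 0 ≤ κ x k) (hc : ∀ i s, 0 ≤ c i s) (x) (u) :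
    0 ≤ chn i c κ x u :=
  law_nonneg (fun _ _ => hc _ _) (fun _ _ => hκ _ _) _

def hyb {n : ℕ} {S : Type*} (a b : S → ℝ) (k : ℕ) : Fin n → S → ℝ := fun j => if j.val < k then a else b

lemma hyb_prop {n : ℕ} {S : Type*} {a b : S → ℝ} (Pr : (S → ℝ) → Prop) (ha : Pr a) (hb : Pr b) (k : ℕ)
    (j : Fin n) : Pr (hyb a b k j) := by
  unfold hyb; split_ifs <;> assumption

lemma hyb_succ_ne {n : ℕ} {S : Type*} (a b : S → ℝ) (i j : Fin n) (h : j ≠ i) :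
    hyb a b (i.val + 1) j = hyb a b i.val j := by
  unfold hyb
  have : j.val ≠ i.val := fun h' => h (Fin.ext h')
  have : (j.val < i.val + 1) ↔ j.val < i.val := by omega
  simp [this]

lemma hyb_succ_self {n : ℕ} {S : Type*} (a b : S → ℝ) (i : Fin n) : hyb a b (i.val + 1) i = a := by
  simp [hyb]

lemma hyb_self {n : ℕ} {S : Type*} (a b : S → ℝ) (i : Fin n) : hyb a b i.val i = b := by
  simp [hyb]

open Classical in
def tl (pX : X → ℝ) (a : X × (X ⊕ W) → ℝ) : (X ⊕ W) → (X ⊕ W) → ℝ :=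
  Sum.elim (fun x v => if pX x = 0 then (if v = Sum.inl x then 1 else 0) else a (x, v) / pX x)
    (fun w v => if v = Sum.inr w then 1 else 0)

lemma tl_nonneg {pX : X → ℝ} {a : X × (X ⊕ W) → ℝ} (h : ∀ x, 0 ≤ pX x) (ha : ∀ s, 0 ≤ a s) (v v') :
    0 ≤ tl pX a v v' := by
  rcases v with x | w
  · simp only [tl, Sum.elim_inl]
    split_ifs
    · exact zero_le_one
    · exact le_rfl
    · exact div_nonneg (ha _) (h _)
  · simp only [tl, Sum.elim_inr]
    split_ifs
    · exact zero_le_one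
    · exact le_rfl

lemma tl_sum {pX : X → ℝ} {a : X × (X ⊕ W) → ℝ} (h : ∀ x, ∑ v, a (x, v) = pX x) (v) :
    ∑ v', tl pX a v v' = 1 := by
  classical
  rcases v with x | w
  · simp only [tl, Sum.elim_inl]
    by_cases hx : pX x = 0
    · simp [hx]
    · simp only [hx, if_false]
      rw [← Finset.sum_div, h, div_self hx]
  · simp [tl]

lemma tl_post {pX : X → ℝ} {a : X × (X ⊕ W) → ℝ} (ha : ∀ s, 0 ≤ a s) (h : ∀ x, ∑ v, a (x, v) = pX x) (x v') :
    a (x, v') = ∑ v, dl W pX (x, v) * tl pX a v v' := by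
  classical
  simp only [dl, tl, Fintype.sum_sum_type, Sum.elim_inl, Sum.elim_inr, ite_mul, zero_mul,
    Finset.sum_ite_eq, Finset.mem_univ, if_true, Finset.sum_const_zero, add_zero]
  by_cases hx : pX x = 0
  · rw [hx, zero_mul]
    rw [← h x, Finset.sum_eq_zero_iff_of_nonneg (fun _ _ => ha _)] at hx
    exact hx v' (Finset.mem_univ _)
  · simp only [hx, if_false]; field_simp

open Classical in
lemma id_post (a : X × V → ℝ) (x v') : a (x, v') = ∑ v, a (x, v) * (if v' = v then 1 else 0) := by
  simp

lemma chn_mono {m : ℕ} (i : Fin (m+1)) {c c' : Fin (m+1) → X × V → ℝ} {κ : (Fin (m+1) → X) → M → ℝ}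
    (hκ0 : ∀ x k, 0 ≤ κ x k) (hκ : ∀ x, ∑ k, κ x k = 1)
    (hc : ∀ i s, 0 ≤ c i s) (hc1 : ∀ i, ∑ s, c i s = 1)
    (hc' : ∀ i s, 0 ≤ c' i s) (hc1' : ∀ i, ∑ s, c' i s = 1)
    (h : ∀ i, ∃ t : V → V → ℝ, (∀ v v', 0 ≤ t v v') ∧ (∀ v, ∑ v', t v v' = 1) ∧
      ∀ x v', c' i (x, v') = ∑ v, c i (x, v) * t v v')
    {p : X × V' → ℝ} (hp : ∀ s, 0 ≤ p s) :
    JJ p (chn i c' κ) ≤ JJ p (chn i c κ) := by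
  choose t ht0 ht1 ht using h
  exact JJ_mono hp (chn_nonneg i hκ0 hc) (chn_sum i hκ hc1) (chn_nonneg i hκ0 hc') (chn_sum i hκ hc1')
    (pT fun j => t (i.succAbove j)) (pT_nonneg fun j => ht0 _) (pT_sum fun j => ht1 _)
    (fun x u' => law_post (fun j => ht _) u')

/-- increments -/
lemma JJ_chn {m : ℕ} (i : Fin (m+1)) {c c1 c2 : Fin (m+1) → X × (X ⊕ W) → ℝ} {κ : (Fin (m+1) → X) → M → ℝ}
    (hκ : ∀ x, ∑ k, κ x k = 1) (hc1 : ∀ i, ∑ s, c i s = 1)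
    {pX : X → ℝ} {p : X × (X ⊕ W) → ℝ} (hp : ∀ x, ∑ v, p (x, v) = pX x)
    (h1 : ∀ j, j ≠ i → c1 j = c j) (h2 : ∀ j, j ≠ i → c2 j = c j)
    (h1i : c1 i = p) (h2i : c2 i = dl W pX) :
    JJ p (chn i c κ) = ent c1 κ - ent c2 κ - hV p + hV (dl W pX) := by
  rw [ent_chn i c1, ent_chn i c2, chn_congr i κ h1, chn_congr i κ h2, h1i, h2i,
    ent_dl _ (chn_sum i hκ hc1), hV_dl]
  unfold JJ
  simp only [hp]
  ring

lemma MI_Y {m : ℕ} [Nonempty M] {κ : (Fin (m+1) → X) → M → ℝ}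
    (hκ0 : ∀ x k, 0 ≤ κ x k) (hκ : ∀ x, ∑ k, κ x k = 1)
    {pX : X → ℝ} {a b : X × (X ⊕ W) → ℝ} (ha : ∀ s, 0 ≤ a s) (hb : ∀ s, 0 ≤ b s)
    (hpX : ∀ x, 0 ≤ pX x) (hpX1 : ∑ x, pX x = 1)
    (haX : ∀ x, ∑ v, a (x, v) = pX x) (hbX : ∀ x, ∑ v, b (x, v) = pX x) :
    ∑ i : Fin (m+1), JJ a (chn i (hyb a b i.val) κ) ≤ Real.log (Fintype.card M) := by
  classical
  have ha1 : ∑ s, a s = 1 := by rw [Fintype.sum_prod_type]; simp [haX, hpX1]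
  have hb1 : ∑ s, b s = 1 := by rw [Fintype.sum_prod_type]; simp [hbX, hpX1]
  have hd1 : ∑ s, dl W pX s = 1 := by rw [Fintype.sum_prod_type]; simp only [dl_marg, hpX1]
  have hd := dl_nonneg (W := W) hpX
  have step : ∀ i : Fin (m+1), JJ a (chn i (hyb a b i.val) κ) ≤
      (ent (M := M) (hyb a (dl W pX) (i.val+1) : Fin (m+1) → _) κ - ent (hyb a (dl W pX) i.val) κ) - hV a + hV (dl W pX) := by
    intro i
    refine le_trans (chn_mono i (c := hyb a (dl W pX) i.val) hκ0 hκ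
      (hyb_prop (fun f => ∀ s, 0 ≤ f s) ha hd _) (hyb_prop (fun f => ∑ s, f s = 1) ha1 hd1 _)
      (hyb_prop (fun f => ∀ s, 0 ≤ f s) ha hb _) (hyb_prop (fun f => ∑ s, f s = 1) ha1 hb1 _)
      ?_ ha) (le_of_eq ?_)
    · intro j
      by_cases hj : j.val < i.val
      · refine ⟨fun v v' => if v' = v then 1 else 0, fun v v' => by dsimp only; split_ifs <;> simp, by simp, ?_⟩
        simp only [hyb, hj, if_true]
        exact fun x v' => by simp
      · refine ⟨tl pX b, tl_nonneg hpX hb, tl_sum hbX, ?_⟩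
        simp only [hyb, hj, if_false]
        exact tl_post hb hbX
    · exact JJ_chn i hκ (hyb_prop (fun f => ∑ s, f s = 1) ha1 hd1 _) haX
        (fun j hj => hyb_succ_ne _ _ _ _ hj) (fun j hj => rfl) (hyb_succ_self _ _ _) (hyb_self _ _ _)
  refine (Finset.sum_le_sum fun i _ => step i).trans ?_
  rw [Finset.sum_add_distrib, Finset.sum_sub_distrib,
    Fin.sum_univ_eq_sum_range (fun k => ent (M := M) (hyb a (dl W pX) (k+1) : Fin (m+1) → _) κ -
      ent (hyb a (dl W pX) k) κ), Finset.sum_range_sub (fun k => ent (M := M) (hyb a (dl W pX) k : Fin (m+1) → _) κ)]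
  have e1 : (hyb a (dl W pX) (m+1) : Fin (m+1) → _) = fun _ => a := by
    funext j; simp only [hyb]; rw [if_pos j.2]
  have e2 : (hyb a (dl W pX) 0 : Fin (m+1) → _) = fun _ => dl W pX := by
    funext j; simp [hyb]
  rw [e1, e2]
  have u := ent_upper (M := M) (c := fun _ : Fin (m+1) => a) (κ := κ) (fun _ => ha) hκ0 hκ (fun _ => sum_comm_one ha1)
  have l := ent_lower (M := M) (c := fun _ : Fin (m+1) => dl W pX) (κ := κ) (fun _ => hd) hκ0 hκ (fun _ => sum_comm_one hd1)
  linarith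

lemma MI_Z {m : ℕ} [Nonempty M] {κ : (Fin (m+1) → X) → M → ℝ}
    (hκ0 : ∀ x k, 0 ≤ κ x k) (hκ : ∀ x, ∑ k, κ x k = 1)
    {pX : X → ℝ} {a b : X × (X ⊕ W) → ℝ} (ha : ∀ s, 0 ≤ a s) (hb : ∀ s, 0 ≤ b s)
    (hpX : ∀ x, 0 ≤ pX x) (hpX1 : ∑ x, pX x = 1)
    (haX : ∀ x, ∑ v, a (x, v) = pX x) (hbX : ∀ x, ∑ v, b (x, v) = pX x) :
    ∑ i : Fin (m+1), JJ b (chn i (hyb a b i.val) κ) ≤ Real.log (Fintype.card M) := by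
  classical
  have ha1 : ∑ s, a s = 1 := by rw [Fintype.sum_prod_type]; simp [haX, hpX1]
  have hb1 : ∑ s, b s = 1 := by rw [Fintype.sum_prod_type]; simp [hbX, hpX1]
  have hd1 : ∑ s, dl W pX s = 1 := by rw [Fintype.sum_prod_type]; simp only [dl_marg, hpX1]
  have hd := dl_nonneg (W := W) hpX
  have step : ∀ i : Fin (m+1), JJ b (chn i (hyb a b i.val) κ) ≤
      -(ent (M := M) (hyb (dl W pX) b (i.val+1) : Fin (m+1) → _) κ - ent (hyb (dl W pX) b i.val) κ) - hV b + hV (dl W pX) := by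
    intro i
    refine le_trans (chn_mono i (c := hyb (dl W pX) b i.val) hκ0 hκ
      (hyb_prop (fun f => ∀ s, 0 ≤ f s) hd hb _) (hyb_prop (fun f => ∑ s, f s = 1) hd1 hb1 _)
      (hyb_prop (fun f => ∀ s, 0 ≤ f s) ha hb _) (hyb_prop (fun f => ∑ s, f s = 1) ha1 hb1 _)
      ?_ hb) (le_of_eq ?_)
    · intro j
      by_cases hj : j.val < i.val
      · refine ⟨tl pX a, tl_nonneg hpX ha, tl_sum haX, ?_⟩
        simp only [hyb, hj, if_true]
        exact tl_post ha haX
      · refine ⟨fun v v' => if v' = v then 1 else 0, fun v v' => by dsimp only; split_ifs <;> simp, by simp, ?_⟩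
        simp only [hyb, hj, if_false]
        exact fun x v' => by simp
    · rw [JJ_chn i hκ (hyb_prop (fun f => ∑ s, f s = 1) hd1 hb1 _) hbX
        (fun j hj => rfl) (fun j hj => hyb_succ_ne _ _ _ _ hj) (hyb_self _ _ _) (hyb_succ_self _ _ _)]
      ring
  refine (Finset.sum_le_sum fun i _ => step i).trans ?_
  rw [Finset.sum_add_distrib, Finset.sum_sub_distrib, Finset.sum_neg_distrib,
    Fin.sum_univ_eq_sum_range (fun k => ent (M := M) (hyb (dl W pX) b (k+1) : Fin (m+1) → _) κ -
      ent (hyb (dl W pX) b k) κ), Finset.sum_range_sub (fun k => ent (M := M) (hyb (dl W pX) b k : Fin (m+1) → _) κ)]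
  have e1 : (hyb (dl W pX) b (m+1) : Fin (m+1) → _) = fun _ => dl W pX := by
    funext j; simp only [hyb]; rw [if_pos j.2]
  have e2 : (hyb (dl W pX) b 0 : Fin (m+1) → _) = fun _ => b := by
    funext j; simp [hyb]
  rw [e1, e2]
  have u := ent_upper (M := M) (c := fun _ : Fin (m+1) => b) (κ := κ) (fun _ => hb) hκ0 hκ (fun _ => sum_comm_one hb1)
  have l := ent_lower (M := M) (c := fun _ : Fin (m+1) => dl W pX) (κ := κ) (fun _ => hd) hκ0 hκ (fun _ => sum_comm_one hd1)
  linarith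

/-! lifting to a larger alphabet -/

def lf {X W V : Type*} (ι : W → V) (p : X × W → ℝ) : X × V → ℝ :=
  fun s => Function.extend ι (fun w => p (s.1, w)) 0 s.2

lemma lf_apply {X W V : Type*} {ι : W → V} (hι : Function.Injective ι) (p : X × W → ℝ) (x w) :
    lf ι p (x, ι w) = p (x, w) := by
  simp [lf, hι.extend_apply]

lemma lf_off {X W V : Type*} {ι : W → V} (p : X × W → ℝ) (x) {v} (hv : v ∉ Set.range ι) :
    lf ι p (x, v) = 0 := by
  unfold lf
  rw [Function.extend_apply' _ _ _ (by simpa using hv)]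
  rfl

lemma sum_lf {ι : W → V} (hι : Function.Injective ι) (F : V → ℝ) (hF : ∀ v, v ∉ Set.range ι → F v = 0) :
    ∑ v, F v = ∑ w, F (ι w) :=
  (Fintype.sum_of_injective ι hι _ _ hF fun _ => rfl).symm

lemma lf_nonneg {X W V : Type*} {ι : W → V} (hι : Function.Injective ι) {p : X × W → ℝ}
    (hp : ∀ s, 0 ≤ p s) (s) : 0 ≤ lf ι p s := by
  obtain ⟨x, v⟩ := s
  by_cases hv : v ∈ Set.range ι
  · obtain ⟨w, rfl⟩ := hv
    rw [lf_apply hι]; exact hp _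
  · rw [lf_off _ _ hv]

lemma lf_ac {X W V : Type*} {ι : W → V} (hι : Function.Injective ι) {p q : X × W → ℝ}
    (h : ∀ s, q s = 0 → p s = 0) (s) (hs : lf ι q s = 0) : lf ι p s = 0 := by
  obtain ⟨x, v⟩ := s
  by_cases hv : v ∈ Set.range ι
  · obtain ⟨w, rfl⟩ := hv
    rw [lf_apply hι] at *; exact h _ hs
  · rw [lf_off _ _ hv]

lemma lf_marg {ι : W → V} (hι : Function.Injective ι) (p : X × W → ℝ) (x) :
    ∑ v, lf ι p (x, v) = ∑ w, p (x, w) := by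
  rw [sum_lf hι _ fun v hv => lf_off _ _ hv]
  simp only [lf_apply hι]

lemma JJ_lf {ι : W → V} (hι : Function.Injective ι) (p : X × W → ℝ) (ch : X → U → ℝ) :
    JJ (lf ι p) ch = JJ p ch := by
  unfold JJ hV
  simp only [lf_marg hι]
  congr 2
  · refine Finset.sum_congr rfl fun u _ => ?_
    rw [sum_lf hι]
    · simp only [lf_apply hι]
    · intro v hv; simp [lf_off _ _ hv]
  · rw [sum_lf hι]
    · simp only [lf_apply hι]
    · intro v hv; simp [lf_off _ _ hv]

def DD (p q : X × V → ℝ) (g h : X → ℝ) : ℝ :=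
  ∑ v, (∑ x, p (x, v) * g x) * Real.log ((∑ x, p (x, v) * g x) / ∑ x, q (x, v) * h x)

lemma DD_lf {ι : W → V} (hι : Function.Injective ι) (p q : X × W → ℝ) (g h : X → ℝ) :
    DD (lf ι p) (lf ι q) g h = DD p q g h := by
  unfold DD
  rw [sum_lf hι]
  · simp only [lf_apply hι]
  · intro v hv; simp [lf_off _ _ hv]

lemma DD_smul (p q : X × V → ℝ) (g h : X → ℝ) {s : ℝ} (hs : s ≠ 0) :
    DD p q (fun x => s * g x) (fun x => s * h x) = s * DD p q g h := by
  unfold DD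
  rw [Finset.mul_sum]
  refine Finset.sum_congr rfl fun v _ => ?_
  have : ∀ (p : X × V → ℝ) (g : X → ℝ), ∑ x, p (x, v) * (s * g x) = s * ∑ x, p (x, v) * g x := by
    intro p g
    rw [Finset.mul_sum]
    exact Finset.sum_congr rfl fun x _ => by ring
  rw [this, this, mul_div_mul_left _ _ hs]; ring

lemma law_lf {n : ℕ} {ι : W → V} (hι : Function.Injective ι) (p : X × W → ℝ)
    (κ : (Fin n → X) → M → ℝ) (k w) :
    law (fun _ => lf ι p) κ (k, fun i => ι (w i)) = law (fun _ => p) κ (k, w) := by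
  simp only [law, lf_apply hι]

lemma kl_lf {n : ℕ} {ι : W → V} (hι : Function.Injective ι) (p q : X × W → ℝ)
    (κ : (Fin n → X) → M → ℝ) :
    kl (law (fun _ => lf ι p) κ) (law (fun _ => lf ι q) κ) = kl (law (fun _ => p) κ) (law (fun _ => q) κ) := by
  unfold kl
  symm
  refine Fintype.sum_of_injective (fun u : M × (Fin n → W) => (u.1, fun i => ι (u.2 i))) ?_ _ _ ?_ ?_
  · rintro ⟨k, w⟩ ⟨k', w'⟩ h
    simp only [Prod.mk.injEq] at h
    refine Prod.ext h.1 (funext fun i => hι (congrFun h.2 i))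
  · rintro ⟨k, w⟩ hw
    have : ∃ i, w i ∉ Set.range ι := by
      by_contra hcon
      push Not at hcon
      choose w' hw' using hcon
      exact hw ⟨(k, w'), by simp [hw']⟩
    obtain ⟨i, hi⟩ := this
    have : law (fun _ => lf ι p) κ (k, w) = 0 := by
      refine Finset.sum_eq_zero fun x _ => ?_
      have h0 : ∏ i, lf ι p (x i, w i) = 0 := Finset.prod_eq_zero (Finset.mem_univ i) (lf_off p (x i) hi)
      simp only [h0, zero_mul]
    rw [this, zero_mul]
  · rintro ⟨k, w⟩
    dsimp only
    rw [law_lf hι, law_lf hι]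

lemma kl_chn {m : ℕ} (i : Fin (m+1)) (c c' : Fin (m+1) → X × V → ℝ) (κ : (Fin (m+1) → X) → M → ℝ) :
    kl (law c κ) (law c' κ) =
      ∑ u, DD (c i) (c' i) (fun x => chn i c κ x u) (fun x => chn i c' κ x u) := by
  unfold kl
  rw [sum_ins' i]
  simp only [law_ins]
  rfl

lemma kl_tele {m : ℕ} (a b a' b' : X × V → ℝ) (κ : (Fin (m+1) → X) → M → ℝ) :
    kl (law (fun _ => a) κ) (law (fun _ => a') κ) - kl (law (fun _ => b) κ) (law (fun _ => b') κ) =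
    ∑ i : Fin (m+1), ∑ u, (DD a a' (fun x => chn i (hyb a b i.val) κ x u) (fun x => chn i (hyb a' b' i.val) κ x u)
      - DD b b' (fun x => chn i (hyb a b i.val) κ x u) (fun x => chn i (hyb a' b' i.val) κ x u)) := by
  have h : ∀ i : Fin (m+1), ∑ u, (DD a a' (fun x => chn i (hyb a b i.val) κ x u) (fun x => chn i (hyb a' b' i.val) κ x u)
      - DD b b' (fun x => chn i (hyb a b i.val) κ x u) (fun x => chn i (hyb a' b' i.val) κ x u)) =
      kl (law (hyb a b (i.val+1)) κ) (law (hyb a' b' (i.val+1)) κ)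
        - kl (law (hyb a b i.val) κ) (law (hyb a' b' i.val) κ) := by
    intro i
    rw [kl_chn i, kl_chn i, Finset.sum_sub_distrib,
      chn_congr i κ (fun j hj => hyb_succ_ne a b i j hj), chn_congr i κ (fun j hj => hyb_succ_ne a' b' i j hj)]
    simp only [hyb_succ_self, hyb_self]
  simp only [h]
  rw [Fin.sum_univ_eq_sum_range (fun k => kl (law (hyb a b (k+1) : Fin (m+1) → _) κ) (law (hyb a' b' (k+1)) κ)
        - kl (law (hyb a b k) κ) (law (hyb a' b' k) κ)),
    Finset.sum_range_sub (fun k => kl (law (hyb a b k : Fin (m+1) → _) κ) (law (hyb a' b' k) κ))]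
  have e1 : ∀ a b : X × V → ℝ, (hyb a b (m+1) : Fin (m+1) → _) = fun _ => a := by
    intro a b; funext j; simp only [hyb]; rw [if_pos j.2]
  have e2 : ∀ a b : X × V → ℝ, (hyb a b 0 : Fin (m+1) → _) = fun _ => b := by
    intro a b; funext j; simp [hyb]
  rw [e1, e1, e2, e2]

/-! mutual information -/

lemma condMI_JJ {p : X × V → ℝ} {ch : X → U → ℝ} (hch1 : ∀ x, ∑ u, ch x u = 1) :
    condMI (fun w : U × X × V => ch w.2.1 w.1 * p (w.2.1, w.2.2))
      (fun w => w.1) (fun w => w.2.1) (fun w => w.2.2) = JJ p ch := by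
  classical
  have h1 : pushf (fun w : U × X × V => ch w.2.1 w.1 * p (w.2.1, w.2.2)) (fun w => (w.1, w.2.2)) =
      fun s => ∑ x, p (x, s.2) * ch x s.1 := by
    funext ⟨u, v⟩
    simp only [pushf, Fintype.sum_prod_type, Prod.mk.injEq]
    rw [Finset.sum_eq_single u]
    · refine Finset.sum_congr rfl fun x _ => ?_
      rw [Finset.sum_eq_single v]
      · simp [mul_comm]
      · intro b _ hb; simp [hb]
      · simp
    · intro b _ hb; simp [hb]
    · simp
  have h2 : pushf (fun w : U × X × V => ch w.2.1 w.1 * p (w.2.1, w.2.2)) (fun w => (w.2.1, w.2.2)) = p := by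
    funext ⟨x, v⟩
    simp only [pushf, Fintype.sum_prod_type, Prod.mk.injEq]
    have : ∀ u, (∑ x', ∑ v', if x' = x ∧ v' = v then ch x' u * p (x', v') else 0) = ch x u * p (x, v) := by
      intro u
      rw [Finset.sum_eq_single x, Finset.sum_eq_single v]
      · simp
      · intro b _ hb; simp [hb]
      · simp
      · intro b _ hb; simp [hb]
      · simp
    simp only [this]
    rw [← Finset.sum_mul, hch1, one_mul]
  have h3 : pushf (fun w : U × X × V => ch w.2.1 w.1 * p (w.2.1, w.2.2)) (fun w => (w.1, w.2.1, w.2.2)) =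
      (fun w : U × X × V => ch w.2.1 w.1 * p (w.2.1, w.2.2)) := by
    funext s
    simp only [pushf, Prod.mk.eta]
    simp
  have h4 : pushf (fun w : U × X × V => ch w.2.1 w.1 * p (w.2.1, w.2.2)) (fun w => w.2.2) =
      fun v => ∑ x, p (x, v) := by
    funext v
    simp only [pushf, Fintype.sum_prod_type]
    simp only [Finset.sum_ite_eq', Finset.mem_univ, if_true]
    rw [Finset.sum_comm]
    simp only [← Finset.sum_mul, hch1, one_mul]
  have he2 : entropy (fun s : U × V => ∑ x, p (x, s.2) * ch x s.1) = ∑ u, ∑ v, φ (∑ x, p (x, v) * ch x u) := by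
    simp [entropy, Real.negMulLog, Fintype.sum_prod_type]
  have he3 : entropy (fun v => ∑ x, p (x, v)) = hV p := by
    simp [entropy, Real.negMulLog, hV]
  have he4 : entropy (fun w : U × X × V => ch w.2.1 w.1 * p (w.2.1, w.2.2)) =
      entropy p + ∑ x, (∑ v, p (x, v)) * ∑ u, φ (ch x u) := by
    have a1 : entropy (fun w : U × X × V => ch w.2.1 w.1 * p (w.2.1, w.2.2)) =
      ∑ u, ∑ x, ∑ v, φ (ch x u * p (x, v)) := by
      simp only [entropy, Real.negMulLog, Fintype.sum_prod_type, neg_mul, Finset.sum_neg_distrib]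
    have a2 : entropy p = ∑ x, ∑ v, φ (p (x, v)) := by
      simp only [entropy, Real.negMulLog, Fintype.sum_prod_type, neg_mul, Finset.sum_neg_distrib]
    rw [a1, a2, Finset.sum_comm, ← Finset.sum_add_distrib]
    refine Finset.sum_congr rfl fun x _ => ?_
    simp only [Real.negMulLog_mul, Finset.sum_add_distrib, ← Finset.mul_sum, ← Finset.sum_mul, hch1]
    ring
  unfold condMI
  rw [h1, h2, h3, h4, he2, he3, he4]
  unfold JJ
  ring

lemma JJ_equiv (p : X × V → ℝ) (ch : X → U → ℝ) (e : U ≃ U') :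
    JJ p (fun x u' => ch x (e.symm u')) = JJ p ch := by
  unfold JJ
  congr 2
  · congr 1
    exact e.symm.sum_comp (fun u => ∑ v, φ (∑ x, p (x, v) * ch x u))
  · funext x
    congr 1
    exact e.symm.sum_comp (fun u => φ (ch x u))

lemma JJ_time {N : ℕ} {s : ℝ} (hs : s * N = 1) {p : X × V → ℝ} (hp : ∑ t, p t = 1)
    (ch : Fin N → X → U → ℝ) (hch1 : ∀ i x, ∑ u, ch i x u = 1) :
    JJ p (fun x (t : Fin N × U) => s * ch t.1 x t.2) = s * ∑ i, JJ p (ch i) := by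
  unfold JJ
  have h1 : ∑ t : Fin N × U, ∑ v, φ (∑ x, p (x, v) * (s * ch t.1 x t.2)) =
      N * φ s + s * ∑ i, ∑ u, ∑ v, φ (∑ x, p (x, v) * ch i x u) := by
    have : ∀ (t : Fin N × U) v, φ (∑ x, p (x, v) * (s * ch t.1 x t.2)) =
      (∑ x, p (x, v) * ch t.1 x t.2) * φ s + s * φ (∑ x, p (x, v) * ch t.1 x t.2) := by
      intro t v
      rw [← Real.negMulLog_mul, Finset.mul_sum]
      congr 1
      exact Finset.sum_congr rfl fun x _ => by ring
    simp only [this, Finset.sum_add_distrib, ← Finset.sum_mul, ← Finset.mul_sum]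
    rw [Fintype.sum_prod_type, Fintype.sum_prod_type]
    congr 2
    have : ∀ i, ∑ u, ∑ v, ∑ x, p (x, v) * ch i x u = 1 := by
      intro i
      rw [Finset.sum_comm, ← sum_comm_one hp]
      refine Finset.sum_congr rfl fun v _ => ?_
      rw [Finset.sum_comm]
      simp [← Finset.mul_sum, hch1]
    simp [this]
  have h2 : ∀ x, ∑ t : Fin N × U, φ (s * ch t.1 x t.2) = N * φ s + s * ∑ i, ∑ u, φ (ch i x u) := by
    intro x
    simp only [Real.negMulLog_mul, Finset.sum_add_distrib, ← Finset.sum_mul, ← Finset.mul_sum]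
    rw [Fintype.sum_prod_type, Fintype.sum_prod_type]
    simp [hch1]
  rw [h1]
  simp only [h2, mul_add, Finset.sum_add_distrib, Finset.sum_sub_distrib]
  rw [← Finset.sum_mul]
  have : ∑ x, ∑ v, p (x, v) = 1 := by rw [← hp, Fintype.sum_prod_type]
  rw [this]
  have h3 : ∑ x, (∑ v, p (x, v)) * (s * ∑ i, ∑ u, φ (ch i x u)) =
      s * ∑ i, ∑ x, (∑ v, p (x, v)) * ∑ u, φ (ch i x u) := by
    rw [Finset.sum_comm, Finset.mul_sum]
    refine Finset.sum_congr rfl fun x _ => ?_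
    rw [← Finset.mul_sum]; ring
  rw [h3]
  simp only [Finset.sum_const, Finset.card_univ, Fintype.card_fin, nsmul_eq_mul]
  linear_combination (hV p) * hs

/-! the single-letter functional -/

lemma klDiv_coe {S : Type*} [Fintype S] {p q : S → ℝ} (h : ∀ a, q a = 0 → p a = 0) :
    klDiv p q = ((kl p q : ℝ) : EReal) := by
  unfold klDiv kl
  rw [if_pos h]

lemma out_cond {p : X × V → ℝ} (hp : ∀ s, 0 ≤ p s) (g : X → ℝ) (P : ℝ) :
    outDist (condSnd p) (fun x => g x * margFst p x / P) = fun v => (∑ x, p (x, v) * g x) / P := by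
  funext v
  unfold outDist condSnd
  rw [Finset.sum_div]
  refine Finset.sum_congr rfl fun x _ => ?_
  by_cases h : margFst p x = 0
  · have h' := h
    unfold margFst at h'
    rw [Finset.sum_eq_zero_iff_of_nonneg (fun _ _ => hp _)] at h'
    rw [h, h' v (Finset.mem_univ _)]; simp
  · field_simp

lemma klDiv_scaled {A B : V → ℝ} {P Q : ℝ} (hP : 0 < P) (hQ : 0 < Q) (hA : ∑ v, A v = P)
    (hAB : ∀ v, B v = 0 → A v = 0) :
    klDiv (fun v => A v / P) (fun v => B v / Q) =
      (((∑ v, A v * Real.log (A v / B v)) / P - Real.log (P / Q) : ℝ) : EReal) := by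
  rw [klDiv_coe]
  · congr 1
    have : Real.log (P / Q) = ∑ v, A v / P * Real.log (P / Q) := by
      rw [← Finset.sum_mul, ← Finset.sum_div, hA, div_self hP.ne', one_mul]
    rw [this, Finset.sum_div, ← Finset.sum_sub_distrib]
    refine Finset.sum_congr rfl fun v _ => ?_
    by_cases h : A v = 0
    · simp [h]
    have hB : B v ≠ 0 := fun hb => h (hAB v hb)
    have e : A v / P / (B v / Q) = (A v / B v) / (P / Q) := by field_simp
    rw [e, Real.log_div (div_ne_zero h hB) (by positivity)]
    ring
  · intro v hv
    simp only [div_eq_zero_iff, hP.ne', hQ.ne', or_false] at hv ⊢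
    exact hAB v hv

lemma sum_ac {p q : X × V → ℝ} {g h : X → ℝ} (hq : ∀ s, 0 ≤ q s) (hh : ∀ x, 0 ≤ h x)
    (hpq : ∀ s, q s = 0 → p s = 0) (hgh : ∀ x, h x = 0 → g x = 0) (v)
    (h0 : ∑ x, q (x, v) * h x = 0) : ∑ x, p (x, v) * g x = 0 := by
  rw [Finset.sum_eq_zero_iff_of_nonneg (fun _ _ => mul_nonneg (hq _) (hh _))] at h0
  refine Finset.sum_eq_zero fun x hx => ?_
  rcases mul_eq_zero.1 (h0 x hx) with h1 | h1
  · rw [hpq _ h1, zero_mul]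
  · rw [hgh _ h1, mul_zero]

lemma sum_marg (p : X × V → ℝ) (g : X → ℝ) :
    ∑ v, ∑ x, p (x, v) * g x = ∑ x, g x * margFst p x := by
  rw [Finset.sum_comm]
  refine Finset.sum_congr rfl fun x _ => ?_
  rw [← Finset.sum_mul, margFst, mul_comm]

variable {Y Z : Type*} [Fintype Y] [Fintype Z]

lemma fdiff_ge {pXY qXY : X × Y → ℝ} {pXZ qXZ : X × Z → ℝ}
    (hpY : ∀ s, 0 ≤ pXY s) (hqY : ∀ s, 0 ≤ qXY s) (hpZ : ∀ s, 0 ≤ pXZ s) (hqZ : ∀ s, 0 ≤ qXZ s)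
    (hp : margFst pXZ = margFst pXY) (hq : margFst qXZ = margFst qXY)
    (hY : ∀ s, qXY s = 0 → pXY s = 0) (hZ : ∀ s, qXZ s = 0 → pXZ s = 0)
    {g h : X → ℝ} (hg : ∀ x, 0 ≤ g x) (hh : ∀ x, 0 ≤ h x) (hgh : ∀ x, h x = 0 → g x = 0)
    (hP : 0 < ∑ x, g x * margFst pXY x) :
    (((DD pXY qXY g h - DD pXZ qXZ g h) / (∑ x, g x * margFst pXY x) : ℝ) : EReal) ≤
      fdiff (condSnd pXY) (condSnd pXZ) (condSnd qXY) (condSnd qXZ) (margFst qXY)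
        (fun x => g x * margFst pXY x / ∑ x', g x' * margFst pXY x') := by
  set P := ∑ x, g x * margFst pXY x with hPdef
  set Q := ∑ x, h x * margFst qXY x with hQdef
  have hmq : ∀ x, 0 ≤ margFst qXY x := fun x => Finset.sum_nonneg fun _ _ => hqY _
  have hQ : 0 < Q := by
    refine lt_of_le_of_ne (Finset.sum_nonneg fun x _ => mul_nonneg (hh x) (hmq x)) fun h0 => ?_
    have : ∀ v, ∑ x, qXY (x, v) * h x = 0 := by
      have := sum_marg qXY h
      rw [← hQdef, ← h0, Finset.sum_eq_zero_iff_of_nonneg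
        (fun _ _ => Finset.sum_nonneg fun _ _ => mul_nonneg (hqY _) (hh _))] at this
      exact fun v => this v (Finset.mem_univ _)
    have h1 := sum_marg pXY g
    rw [Finset.sum_eq_zero fun v _ => sum_ac hqY hh hY hgh v (this v)] at h1
    linarith
  refine le_sSup ⟨fun x => h x * margFst qXY x / Q, ⟨fun x => div_nonneg (mul_nonneg (hh x) (hmq x)) hQ.le, ?_⟩,
    fun x hx => by simp [hx], ?_⟩
  · rw [← Finset.sum_div, ← hQdef, div_self hQ.ne']
  · have hsZ : ∑ v, ∑ x, pXZ (x, v) * g x = P := by rw [sum_marg, hp]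
    have oZ := out_cond hpZ g P
    have oZ' := out_cond hqZ h Q
    rw [hp] at oZ
    rw [hq] at oZ'
    rw [out_cond hpY, out_cond hqY, oZ, oZ',
      klDiv_scaled hP hQ (sum_marg pXY g) (sum_ac hqY hh hY hgh),
      klDiv_scaled hP hQ hsZ (sum_ac hqZ hh hZ hgh), ← EReal.coe_sub]
    congr 1
    unfold DD
    ring

lemma coe_sum' {S : Type*} (s : Finset S) (f : S → ℝ) : ((∑ i ∈ s, f i : ℝ) : EReal) = ∑ i ∈ s, (f i : EReal) := by
  classical
  induction s using Finset.induction_on with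
  | empty => simp
  | insert a s ha ih => rw [Finset.sum_insert ha, Finset.sum_insert ha, EReal.coe_add, ih]

lemma Gexp_ge {pXY qXY : X × Y → ℝ} {pXZ qXZ : X × Z → ℝ} {R : ℝ}
    (hpY : ∀ s, 0 ≤ pXY s) (hqY : ∀ s, 0 ≤ qXY s) (hpZ : ∀ s, 0 ≤ pXZ s) (hqZ : ∀ s, 0 ≤ qXZ s)
    (hp : margFst pXZ = margFst pXY) (hq : margFst qXZ = margFst qXY)
    (hY : ∀ s, qXY s = 0 → pXY s = 0) (hZ : ∀ s, qXZ s = 0 → pXZ s = 0)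
    {g h : X → U → ℝ} (hg : ∀ x u, 0 ≤ g x u) (hg1 : ∀ x, ∑ u, g x u = 1)
    (hh : ∀ x u, 0 ≤ h x u) (hgh : ∀ x u, h x u = 0 → g x u = 0)
    (hJY : JJ pXY g ≤ R) (hJZ : JJ pXZ g ≤ R) :
    ((∑ u, (DD pXY qXY (fun x => g x u) (fun x => h x u) -
      DD pXZ qXZ (fun x => g x u) (fun x => h x u)) : ℝ) : EReal) ≤ Gexp pXY qXY pXZ qXZ R := by
  let e := Fintype.equivFin U
  have hsum : ∀ x, ∑ k, g x (e.symm k) = 1 := fun x => by rw [e.symm.sum_comp (fun u => g x u), hg1]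
  refine le_trans ?_ (le_sSup ⟨Fintype.card U, fun x k => g x (e.symm k), fun x => ⟨fun k => hg _ _, hsum x⟩, ?_, ?_, rfl⟩)
  · rw [← e.symm.sum_comp, coe_sum']
    refine Finset.sum_le_sum fun k _ => ?_
    set u := e.symm k
    have hm : ∀ x, 0 ≤ margFst pXY x := fun x => Finset.sum_nonneg fun _ _ => hpY _
    have hP0 : 0 ≤ ∑ x, g x u * margFst pXY x := Finset.sum_nonneg fun x _ => mul_nonneg (hg x u) (hm x)
    rcases hP0.eq_or_lt with h0 | hpos
    · rw [← h0]
      have k1 : DD pXY qXY (fun x => g x u) (fun x => h x u) = 0 := by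
        have h1 := sum_marg pXY (fun x => g x u)
        rw [← h0, Finset.sum_eq_zero_iff_of_nonneg
          (fun _ _ => Finset.sum_nonneg fun _ _ => mul_nonneg (hpY _) (hg _ _))] at h1
        refine Finset.sum_eq_zero fun v hv => ?_
        rw [h1 v hv, zero_mul]
      have k2 : DD pXZ qXZ (fun x => g x u) (fun x => h x u) = 0 := by
        have h1 := sum_marg pXZ (fun x => g x u)
        rw [hp, ← h0, Finset.sum_eq_zero_iff_of_nonneg
          (fun _ _ => Finset.sum_nonneg fun _ _ => mul_nonneg (hpZ _) (hg _ _))] at h1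
        refine Finset.sum_eq_zero fun v hv => ?_
        rw [h1 v hv, zero_mul]
      rw [k1, k2]
      simp
    · have := fdiff_ge hpY hqY hpZ hqZ hp hq hY hZ (fun x => hg x u) (fun x => hh x u) (fun x => hgh x u) hpos
      refine le_trans (le_of_eq ?_) (mul_le_mul_of_nonneg_left this (by exact_mod_cast hP0))
      rw [← EReal.coe_mul]
      congr 1
      exact (mul_div_cancel₀ _ hpos.ne').symm
  · rw [condMI_JJ hsum, JJ_equiv]; exact hJY
  · rw [condMI_JJ hsum, JJ_equiv]; exact hJZ

lemma core {pXY qXY : X × Y → ℝ} {pXZ qXZ : X × Z → ℝ} {R : ℝ}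
    (hpY : ∀ s, 0 ≤ pXY s) (hqY : ∀ s, 0 ≤ qXY s) (hpZ : ∀ s, 0 ≤ pXZ s) (hqZ : ∀ s, 0 ≤ qXZ s)
    (hp1 : ∑ s, pXY s = 1)
    (hp : margFst pXZ = margFst pXY) (hq : margFst qXZ = margFst qXY)
    (hY : ∀ s, qXY s = 0 → pXY s = 0) (hZ : ∀ s, qXZ s = 0 → pXZ s = 0)
    {m : ℕ} [Nonempty M] {κ : (Fin (m+1) → X) → M → ℝ}
    (hκ0 : ∀ x k, 0 ≤ κ x k) (hκ : ∀ x, ∑ k, κ x k = 1)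
    (hM : Real.log (Fintype.card M) ≤ ((m+1 : ℕ) : ℝ) * R) :
    (((((m+1 : ℕ) : ℝ)⁻¹) * (kl (law (fun _ => pXY) κ) (law (fun _ => qXY) κ) -
      kl (law (fun _ => pXZ) κ) (law (fun _ => qXZ) κ)) : ℝ) : EReal) ≤ Gexp pXY qXY pXZ qXZ R := by
  let ιY : Y → X ⊕ (Y ⊕ Z) := fun y => Sum.inr (Sum.inl y)
  let ιZ : Z → X ⊕ (Y ⊕ Z) := fun y => Sum.inr (Sum.inr y)
  have iY : Function.Injective ιY := fun a b h => by simpa [ιY] using h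
  have iZ : Function.Injective ιZ := fun a b h => by simpa [ιZ] using h
  set a := lf ιY pXY with ha
  set b := lf ιZ pXZ with hb
  set a' := lf ιY qXY with ha'
  set b' := lf ιZ qXZ with hb'
  have ha0 : ∀ s, 0 ≤ a s := lf_nonneg iY hpY
  have hb0 : ∀ s, 0 ≤ b s := lf_nonneg iZ hpZ
  have ha0' : ∀ s, 0 ≤ a' s := lf_nonneg iY hqY
  have hb0' : ∀ s, 0 ≤ b' s := lf_nonneg iZ hqZ
  have haX : ∀ x, ∑ v, a (x, v) = margFst pXY x := lf_marg iY pXY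
  have hbX : ∀ x, ∑ v, b (x, v) = margFst pXY x := fun x => by
    rw [← hp]; exact lf_marg iZ pXZ x
  have hpX : ∀ x, 0 ≤ margFst pXY x := fun x => Finset.sum_nonneg fun _ _ => hpY _
  have hpX1 : ∑ x, margFst pXY x = 1 := by
    rw [← hp1, Fintype.sum_prod_type]; rfl
  have hpZ1 : ∑ s, pXZ s = 1 := by
    rw [Fintype.sum_prod_type, ← hpX1, ← hp]; rfl
  have ha1 : ∑ s, a s = 1 := by rw [Fintype.sum_prod_type]; simp only [haX, hpX1]
  have hb1 : ∑ s, b s = 1 := by rw [Fintype.sum_prod_type]; simp only [hbX, hpX1]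
  set s : ℝ := (((m+1 : ℕ) : ℝ))⁻¹ with hs
  have hspos : 0 < s := by positivity
  have hsN : s * ((m+1 : ℕ) : ℝ) = 1 := inv_mul_cancel₀ (by positivity)
  have hcs : ∀ (i : Fin (m+1)) x, ∑ u, chn i (hyb a b i.val) κ x u = 1 :=
    fun i => chn_sum i hκ (hyb_prop (fun f => ∑ s, f s = 1) ha1 hb1 _)
  have hc0 : ∀ (i : Fin (m+1)) x u, 0 ≤ chn i (hyb a b i.val) κ x u :=
    fun i => chn_nonneg i hκ0 (hyb_prop (fun f => ∀ s, 0 ≤ f s) ha0 hb0 _)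
  have hc0' : ∀ (i : Fin (m+1)) x u, 0 ≤ chn i (hyb a' b' i.val) κ x u :=
    fun i => chn_nonneg i hκ0 (hyb_prop (fun f => ∀ s, 0 ≤ f s) ha0' hb0' _)
  have hac : ∀ (i j : Fin (m+1)) s, hyb a' b' i.val j s = 0 → hyb a b i.val j s = 0 := by
    intro i j s
    unfold hyb
    split_ifs
    · exact lf_ac iY hY s
    · exact lf_ac iZ hZ s
  have hcac : ∀ (i : Fin (m+1)) x u, chn i (hyb a' b' i.val) κ x u = 0 → chn i (hyb a b i.val) κ x u = 0 :=
    fun i x u => law_ac (fun j => hyb_prop (fun f => ∀ s, 0 ≤ f s) ha0' hb0' _ _) (fun _ _ => hκ0 _ _)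
      (fun j => hac i _) u
  have hsM : s * Real.log (Fintype.card M) ≤ R := by
    calc _ ≤ s * (((m+1 : ℕ) : ℝ) * R) := mul_le_mul_of_nonneg_left hM hspos.le
      _ = R := by rw [← mul_assoc, hsN, one_mul]
  have main := Gexp_ge (R := R) hpY hqY hpZ hqZ hp hq hY hZ
    (g := fun x (t : Fin (m+1) × (M × (Fin m → X ⊕ (Y ⊕ Z)))) => s * chn t.1 (hyb a b t.1.val) κ x t.2)
    (h := fun x t => s * chn t.1 (hyb a' b' t.1.val) κ x t.2)
    (fun x t => mul_nonneg hspos.le (hc0 _ _ _)) ?_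
    (fun x t => mul_nonneg hspos.le (hc0' _ _ _)) ?_ ?_ ?_
  · refine le_trans (le_of_eq ?_) main
    congr 1
    rw [← kl_lf iY pXY qXY κ, ← kl_lf iZ pXZ qXZ κ, kl_tele, Fintype.sum_prod_type, Finset.mul_sum]
    refine Finset.sum_congr rfl fun i _ => ?_
    rw [Finset.mul_sum]
    refine Finset.sum_congr rfl fun u _ => ?_
    rw [DD_smul _ _ _ _ hspos.ne', DD_smul _ _ _ _ hspos.ne', DD_lf iY, DD_lf iZ]
    ring
  · intro x
    rw [Fintype.sum_prod_type]
    simp only [← Finset.mul_sum, hcs]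
    simpa using hsN
  · intro x t h0
    rcases mul_eq_zero.1 h0 with h1 | h1
    · exact absurd h1 hspos.ne'
    · rw [hcac _ _ _ h1, mul_zero]
  · rw [JJ_time hsN hp1 _ hcs]
    refine le_trans (mul_le_mul_of_nonneg_left ?_ hspos.le) hsM
    have := MI_Y hκ0 hκ ha0 hb0 hpX hpX1 haX hbX
    simpa only [ha, JJ_lf iY] using this
  · rw [JJ_time hsN hpZ1 _ hcs]
    refine le_trans (mul_le_mul_of_nonneg_left ?_ hspos.le) hsM
    have := MI_Z hκ0 hκ ha0 hb0 hpX hpX1 haX hbX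
    simpa only [hb, JJ_lf iZ] using this

lemma kl_marg {J : Type*} [Fintype J] {n : ℕ} {p q : X × Y × J → ℝ} {p' q' : X × Y → ℝ}
    (hp : ∀ s, 0 ≤ p s) (hq : ∀ s, 0 ≤ q s) (hpq : ∀ s, q s = 0 → p s = 0)
    (hp' : ∀ x y, p' (x, y) = ∑ j, p (x, y, j)) (hq' : ∀ x y, q' (x, y) = ∑ j, q (x, y, j))
    {κ : (Fin n → X) → M → ℝ} (hκ0 : ∀ x k, 0 ≤ κ x k) :
    kl (law (fun _ => p') κ) (law (fun _ => q') κ) ≤ kl (law (fun _ => p) κ) (law (fun _ => q) κ) := by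
  classical
  have key : ∀ {p : X × Y × J → ℝ} {p' : X × Y → ℝ}, (∀ x y, p' (x, y) = ∑ j, p (x, y, j)) →
      ∀ x y, p' (x, y) = ∑ v : Y × J, p (x, v) * (if v.1 = y then 1 else 0) := by
    intro p p' h x y
    rw [h, Fintype.sum_prod_type, Finset.sum_eq_single y]
    · simp
    · intro b _ hb; simp [hb]
    · simp
  exact dpi _ _ _ _ (law_nonneg (fun _ => hp) hκ0) (law_nonneg (fun _ => hq) hκ0)
    (law_ac (fun _ => hq) hκ0 (fun _ => hpq))
    (pT fun _ (v : Y × J) y => if v.1 = y then 1 else 0)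
    (pT_nonneg fun _ v y => by split_ifs <;> simp) (pT_sum fun _ v => by simp)
    (law_post fun _ => key hp') (law_post fun _ => key hq')

lemma pushf_nonneg {Ω α : Type*} [Fintype Ω] {p : Ω → ℝ} (hp : ∀ w, 0 ≤ p w) (f : Ω → α) (s) :
    0 ≤ pushf p f s := by
  unfold pushf
  refine Finset.sum_nonneg fun w _ => ?_
  split_ifs
  · exact hp _
  · exact le_rfl

lemma pushf_sum {Ω α β : Type*} [Fintype Ω] [Fintype β] (p : Ω → ℝ) (f : Ω → α) (f' : Ω → β) (a : α)
    (ι : β → α × β) (hι : ∀ b, ι b = (a, b)) :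
    ∑ b, pushf p (fun w => (f w, f' w)) (ι b) = pushf p f a := by
  classical
  simp only [pushf, hι, Prod.mk.injEq]
  rw [Finset.sum_comm]
  refine Finset.sum_congr rfl fun w _ => ?_
  by_cases h : f w = a
  · simp [h]
  · simp [h]

lemma pushf_comp {Ω α β : Type*} [Fintype Ω] (p : Ω → ℝ) (f : Ω → α) {e : α → β}
    (he : Function.Injective e) (a : α) :
    pushf p (fun w => e (f w)) (e a) = pushf p f a := by
  classical
  simp only [pushf, he.eq_iff]

lemma pushf_total {Ω α : Type*} [Fintype Ω] [Fintype α] (p : Ω → ℝ) (f : Ω → α) :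
    ∑ a, pushf p f a = ∑ w, p w := by
  classical
  simp only [pushf]
  rw [Finset.sum_comm]
  simp

lemma klDiv_ac {S : Type*} [Fintype S] {p q : S → ℝ} (h : klDiv p q < ⊤) : ∀ a, q a = 0 → p a = 0 := by
  unfold klDiv at h
  by_contra hc
  rw [if_neg hc] at h
  exact lt_irrefl _ h

lemma marg3 {J : Type*} [Fintype J] (P : X × Y × Z × J → ℝ) (x : X) (y : Y) :
    pushf P (fun w => (w.1, w.2.1)) (x, y) = ∑ j, pushf P (fun w => (w.1, w.2.1, w.2.2.2)) (x, y, j) := by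
  have h := fun j => pushf_comp P (fun w : X × Y × Z × J => ((w.1, w.2.1), w.2.2.2))
    (e := fun t : (X × Y) × J => (t.1.1, t.1.2, t.2)) (fun s t h => by
      simp only [Prod.mk.injEq] at h
      exact Prod.ext (Prod.ext h.1 h.2.1) h.2.2) ((x, y), j)
  simp only at h
  simp only [h]
  exact (pushf_sum P (fun w : X × Y × Z × J => (w.1, w.2.1)) (fun w => w.2.2.2) (x, y) (fun j => ((x, y), j))
    (fun _ => rfl)).symm

lemma margY {J : Type*} [Fintype J] (P : X × Y × Z × J → ℝ) :
    margFst (pushf P (fun w => (w.1, w.2.1, w.2.2.2))) = pushf P (fun w => w.1) := by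
  funext x
  exact pushf_sum P (fun w => w.1) (fun w => (w.2.1, w.2.2.2)) x (fun b => (x, b)) (fun _ => rfl)

lemma margZ {J : Type*} [Fintype J] (P : X × Y × Z × J → ℝ) :
    margFst (pushf P (fun w => (w.1, w.2.2.1, w.2.2.2))) = pushf P (fun w => w.1) := by
  funext x
  exact pushf_sum P (fun w => w.1) (fun w => (w.2.2.1, w.2.2.2)) x (fun b => (x, b)) (fun _ => rfl)

end AR

/-- With `Y' = (Y,J)` and `Z' = (Z,J)`:
`E_{P_XY,Q_XY}(R) ≤ G_{P_XY',Q_XY',P_XZ',Q_XZ'}(R) + E_{P_XZ',Q_XZ'}(R)`. -/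
theorem augmented_receiver_bound {X Y Z J : Type*}
    [Fintype X] [Fintype Y] [Fintype Z] [Fintype J]
    (R : ℝ) (hR : 0 < R)
    (P Q : X × Y × Z × J → ℝ) (hP : IsPMF P) (hQ : IsPMF Q)
    (hXYJ : klDiv (pushf P (fun w => (w.1, w.2.1, w.2.2.2)))
        (pushf Q (fun w => (w.1, w.2.1, w.2.2.2))) < ⊤)
    (hXZJ : klDiv (pushf P (fun w => (w.1, w.2.2.1, w.2.2.2)))
        (pushf Q (fun w => (w.1, w.2.2.1, w.2.2.2))) < ⊤) :
    errExp (pushf P (fun w => (w.1, w.2.1))) (pushf Q (fun w => (w.1, w.2.1))) R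
      ≤ Gexp (pushf P (fun w => (w.1, w.2.1, w.2.2.2)))
          (pushf Q (fun w => (w.1, w.2.1, w.2.2.2)))
          (pushf P (fun w => (w.1, w.2.2.1, w.2.2.2)))
          (pushf Q (fun w => (w.1, w.2.2.1, w.2.2.2))) R
        + errExp (pushf P (fun w => (w.1, w.2.2.1, w.2.2.2)))
            (pushf Q (fun w => (w.1, w.2.2.1, w.2.2.2))) R := by
  refine sSup_le ?_
  rintro v ⟨n, hn, κ, hκ, rfl⟩
  obtain ⟨m, rfl⟩ : ∃ m, n = m + 1 := ⟨n - 1, by omega⟩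
  have hκ0 : ∀ x k, 0 ≤ κ x k := fun x => (hκ x).1
  have hκ1 : ∀ x, ∑ k, κ x k = 1 := fun x => (hκ x).2
  have acY := AR.klDiv_ac hXYJ
  have acZ := AR.klDiv_ac hXZJ
  have mP := AR.marg3 P
  have mQ := AR.marg3 Q
  have mgP := (AR.margZ P).trans (AR.margY P).symm
  have mgQ := (AR.margZ Q).trans (AR.margY Q).symm
  have hp1 := (AR.pushf_total P (fun w => (w.1, w.2.1, w.2.2.2))).trans hP.2
  have nP : ∀ s, 0 ≤ pushf P (fun w => (w.1, w.2.1, w.2.2.2)) s := AR.pushf_nonneg hP.1 _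
  have nQ : ∀ s, 0 ≤ pushf Q (fun w => (w.1, w.2.1, w.2.2.2)) s := AR.pushf_nonneg hQ.1 _
  have nPZ : ∀ s, 0 ≤ pushf P (fun w => (w.1, w.2.2.1, w.2.2.2)) s := AR.pushf_nonneg hP.1 _
  have nQZ : ∀ s, 0 ≤ pushf Q (fun w => (w.1, w.2.2.1, w.2.2.2)) s := AR.pushf_nonneg hQ.1 _
  have nQ2 : ∀ s, 0 ≤ pushf Q (fun w => (w.1, w.2.1)) s := AR.pushf_nonneg hQ.1 _
  generalize pushf P (fun w => (w.1, w.2.1, w.2.2.2)) = pY at *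
  generalize pushf Q (fun w => (w.1, w.2.1, w.2.2.2)) = qY at *
  generalize pushf P (fun w => (w.1, w.2.2.1, w.2.2.2)) = pZ at *
  generalize pushf Q (fun w => (w.1, w.2.2.1, w.2.2.2)) = qZ at *
  generalize pushf P (fun w => (w.1, w.2.1)) = p at *
  generalize pushf Q (fun w => (w.1, w.2.1)) = q at *
  have ac : ∀ s, q s = 0 → p s = 0 := by
    rintro ⟨x, y⟩ h
    rw [mQ, Finset.sum_eq_zero_iff_of_nonneg (fun _ _ => nQ _)] at h
    rw [mP]
    exact Finset.sum_eq_zero fun j hj => acY _ (h j hj)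
  have h1 := AR.kl_marg nP nQ acY mP mQ hκ0
  have hM : Real.log (Fintype.card (Fin (2 ^ ⌊((m + 1 : ℕ) : ℝ) * R⌋₊))) ≤ ((m + 1 : ℕ) : ℝ) * R := by
    rw [Fintype.card_fin]
    push_cast
    rw [Real.log_pow]
    have h2 : (⌊((m : ℝ) + 1) * R⌋₊ : ℝ) ≤ ((m : ℝ) + 1) * R := Nat.floor_le (by positivity)
    have h3 : Real.log 2 ≤ 1 := by linarith [Real.log_two_lt_d9]
    have h4 : (0 : ℝ) ≤ (⌊((m : ℝ) + 1) * R⌋₊ : ℝ) := Nat.cast_nonneg _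
    nlinarith
  haveI : Nonempty (Fin (2 ^ ⌊((m + 1 : ℕ) : ℝ) * R⌋₊)) := ⟨⟨0, by positivity⟩⟩
  have h2 := AR.core (R := R) nP nQ nPZ nQZ hp1 mgP mgQ acY acZ hκ0 hκ1 hM
  have hE : ((((((m + 1 : ℕ) : ℝ)⁻¹) * AR.kl (AR.law (fun _ => pZ) κ) (AR.law (fun _ => qZ) κ) : ℝ)) : EReal) ≤
      errExp pZ qZ R := by
    refine le_sSup ⟨m + 1, hn, κ, hκ, ?_⟩
    rw [EReal.coe_mul]
    congr 1
    exact (AR.klDiv_coe (AR.law_ac (fun _ => nQZ) hκ0 (fun _ => acZ))).symm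
  refine le_trans ?_ (add_le_add h2 hE)
  have hY : klDiv (AR.law (fun _ => p) κ) (AR.law (fun _ => q) κ) = _ :=
    AR.klDiv_coe (AR.law_ac (fun _ => nQ2) hκ0 (fun _ => ac))
  refine le_trans (le_of_eq (congrArg _ hY)) ?_
  rw [← EReal.coe_mul, ← EReal.coe_add, EReal.coe_le_coe_iff, ← mul_add, sub_add_cancel]
  exact mul_le_mul_of_nonneg_left h1 (by positivity)

end
end

section
/- Let 0 ≤ ρ₁ < ρ₀ < 1 and R > 0, set ρ = (ρ₀ − ρ₁)/(1 − ρ₁), Δ = (1 − ρ)(1 + ρ₀) / ((e^{2R} − 1) + (1 − ρ)(1 + ρ₀)), and define g : (0,∞) → ℝ by g(s) = ½ ln( (ρ₁ s + 1 − ρ₁) / (ρ² s + (1 − ρ²)(ρ₁ s + 1 − ρ₁)) ). Then (i) g is strictly decreasing on (0,∞), and (ii) the supremum of g(s) over all s ≥ max( (1 − ρ₁)/(e^{2R} − ρ₁), (1 − ρ₀²)/(e^{2R} − ρ₀²) ) is attained at ŝ = max( (1 − ρ₁)/(e^{2R} − ρ₁), (1 − ρ₀²)/(e^{2R} − ρ₀²)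 ) and equals ½ ln( min{ 1/(1 − ρ² + ρ²Δ), 1/(1 − ρ² + ρ² e^{−2R}) } ). -/
noncomputable section

/-- The Gaussian evaluation: the function
`g(s) = ½ ln((ρ₁ s + 1 − ρ₁)/(ρ² s + (1 − ρ²)(ρ₁ s + 1 − ρ₁)))` is strictly decreasing on
`(0,∞)`, and its supremum over `s ≥ max((1−ρ₁)/(e^{2R}−ρ₁), (1−ρ₀²)/(e^{2R}−ρ₀²))` is
attained at the left endpoint and equals
`½ ln(min{1/(1−ρ²+ρ²Δ), 1/(1−ρ²+ρ²e^{−2R})})`. -/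
theorem gaussian_exponent_evaluation
    (ρ₀ ρ₁ R : ℝ) (h1 : 0 ≤ ρ₁) (h2 : ρ₁ < ρ₀) (h3 : ρ₀ < 1) (hR : 0 < R)
    (ρ Δ : ℝ)
    (hρ : ρ = (ρ₀ - ρ₁) / (1 - ρ₁))
    (hΔ : Δ = (1 - ρ) * (1 + ρ₀) / ((Real.exp (2 * R) - 1) + (1 - ρ) * (1 + ρ₀)))
    (g : ℝ → ℝ)
    (hg : ∀ s, g s = (1 / 2) * Real.log
      ((ρ₁ * s + 1 - ρ₁) / (ρ ^ 2 * s + (1 - ρ ^ 2) * (ρ₁ * s + 1 - ρ₁))))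
    (shat : ℝ)
    (hshat : shat = max ((1 - ρ₁) / (Real.exp (2 * R) - ρ₁))
      ((1 - ρ₀ ^ 2) / (Real.exp (2 * R) - ρ₀ ^ 2))) :
    StrictAntiOn g (Set.Ioi 0) ∧
    IsGreatest (g '' Set.Ici shat) (g shat) ∧
    g shat = (1 / 2) * Real.log
      (min (1 / (1 - ρ ^ 2 + ρ ^ 2 * Δ))
        (1 / (1 - ρ ^ 2 + ρ ^ 2 * Real.exp (-(2 * R))))) := by
  have hE : 1 < Real.exp (2 * R) := Real.one_lt_exp_iff.mpr (by linarith)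
  rw [Real.exp_neg]
  set E := Real.exp (2 * R) with hEdef
  clear_value E
  have hr1 : 0 < 1 - ρ₁ := by linarith
  have hρ0 : 0 < ρ := by rw [hρ]; exact div_pos (by linarith) hr1
  have hρ1 : ρ < 1 := by rw [hρ, div_lt_one hr1]; linarith
  have hρ2 : 0 < ρ ^ 2 := by positivity
  have hρ3 : 0 < 1 - ρ ^ 2 := by nlinarith
  have hρ02 : 0 < 1 - ρ₀ ^ 2 := by nlinarith
  have hD : ∀ s, 0 < s → 0 < ρ₁ * s + 1 - ρ₁ := fun s hs => by
    have := mul_nonneg h1 hs.le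
    linarith
  have hG : ∀ s, 0 < s →
      g s = (1 / 2) * Real.log (1 / (1 - ρ ^ 2 + ρ ^ 2 * (s / (ρ₁ * s + 1 - ρ₁)))) := by
    intro s hs
    have hd := hD s hs
    rw [hg]
    congr 2
    have e : 1 - ρ ^ 2 + ρ ^ 2 * (s / (ρ₁ * s + 1 - ρ₁))
        = (ρ ^ 2 * s + (1 - ρ ^ 2) * (ρ₁ * s + 1 - ρ₁)) / (ρ₁ * s + 1 - ρ₁) := by
      rw [eq_div_iff hd.ne', add_mul, mul_assoc, div_mul_cancel₀ _ hd.ne']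
      ring
    rw [e, one_div_div]
  have hmono : ∀ s t, 0 < s → s < t →
      s / (ρ₁ * s + 1 - ρ₁) < t / (ρ₁ * t + 1 - ρ₁) := by
    intro s t hs hst
    rw [div_lt_div_iff₀ (hD s hs) (hD t (hs.trans hst))]
    nlinarith
  have hanti : StrictAntiOn g (Set.Ioi 0) := by
    intro s hs t ht hst
    have hs' : 0 < s := hs
    have ht' : 0 < t := ht
    rw [hG s hs', hG t ht']
    have h := hmono s t hs' hst
    have p1 : 0 < s / (ρ₁ * s + 1 - ρ₁) := div_pos hs' (hD s hs')
    have p2 : 0 < t / (ρ₁ * t + 1 - ρ₁) := div_pos ht' (hD t ht')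
    have h' := mul_lt_mul_of_pos_left h hρ2
    refine mul_lt_mul_of_pos_left (Real.log_lt_log (by positivity) ?_) (by norm_num)
    exact one_div_lt_one_div_of_lt (by positivity) (by linarith)
  have hEa : 0 < E - ρ₁ := by linarith
  have hEb : 0 < E - ρ₀ ^ 2 := by linarith
  have ha : 0 < (1 - ρ₁) / (E - ρ₁) := div_pos hr1 hEa
  have hb : 0 < (1 - ρ₀ ^ 2) / (E - ρ₀ ^ 2) := div_pos hρ02 hEb
  have hE0 : 0 < E := by linarith
  have va : (1 - ρ₁) / (E - ρ₁) / (ρ₁ * ((1 - ρ₁) / (E - ρ₁)) + 1 - ρ₁) = E⁻¹ := by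
    have hd := hD _ ha
    rw [div_eq_iff hd.ne']
    field_simp
    ring
  have vb : (1 - ρ₀ ^ 2) / (E - ρ₀ ^ 2) / (ρ₁ * ((1 - ρ₀ ^ 2) / (E - ρ₀ ^ 2)) + 1 - ρ₁) = Δ := by
    have hd := hD _ hb
    have e1 : (1 - ρ) * (1 + ρ₀) = (1 - ρ₀ ^ 2) / (1 - ρ₁) := by
      rw [hρ]; field_simp; ring
    have p : 0 < (E - 1) + (1 - ρ₀ ^ 2) / (1 - ρ₁) :=
      add_pos (by linarith) (div_pos hρ02 hr1)
    rw [hΔ, e1, div_eq_div_iff hd.ne' p.ne']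
    field_simp
    ring
  have hs0 : 0 < shat := by rw [hshat]; exact lt_max_of_lt_left ha
  refine ⟨hanti, ⟨⟨shat, Set.self_mem_Ici, rfl⟩, ?_⟩, ?_⟩
  · rintro _ ⟨t, ht, rfl⟩
    exact hanti.antitoneOn hs0 (lt_of_lt_of_le hs0 ht) ht
  · have hmono' : ∀ s t, 0 < s → s ≤ t →
        s / (ρ₁ * s + 1 - ρ₁) ≤ t / (ρ₁ * t + 1 - ρ₁) := by
      intro s t hs hst
      rcases hst.eq_or_lt with h | h
      · rw [h]
      · exact (hmono s t hs h).le
    have hEi : 0 < E⁻¹ := inv_pos.mpr hE0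
    have hΔ0 : 0 < Δ := by rw [← vb]; exact div_pos hb (hD _ hb)
    rcases le_total ((1 - ρ₁) / (E - ρ₁)) ((1 - ρ₀ ^ 2) / (E - ρ₀ ^ 2)) with h | h
    · have hm := hmono' _ _ ha h
      rw [va, vb] at hm
      rw [hshat, max_eq_right h, hG _ hb, vb, min_eq_left]
      have := mul_le_mul_of_nonneg_left hm hρ2.le
      exact one_div_le_one_div_of_le (by positivity) (by linarith)
    · have hm := hmono' _ _ hb h
      rw [va, vb] at hm
      rw [hshat, max_eq_left h, hG _ ha, va, min_eq_right]
      have := mul_le_mul_of_nonneg_left hm hρ2.le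
      exact one_div_le_one_div_of_le (by positivity) (by linarith)

end
end
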